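/- Let (T, m) be a complete local equidimensional ring such that dim T ≥ 2, no integer of T is a zerodivisor in T, depth T > 1, and |T| = |T/m|. Let d be an integer such that 1 ≤ d ≤ dim T − 1, and assume that for every p ∈ Ass T, ht p ≤ d − 1, and that if z is a regular element of T and Q ∈ Ass(T/zT), then ht Q ≤ d. Then there exists a local unique factorization domain A such that the completion of A is T and, for every height one prime ideal pA of A, α(A,pA) = α(A,(0)) = d − 1. -/

import Mathlib

universe u

open IsLocalRing Cardinal

/-- The height of an ideal: infimum of heights of primes containing it. -/
noncomputable def idealHt {T : Type*} [CommRing T] (I : Ideal T) : ℕ∞ :=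
  ⨅ (p : PrimeSpectrum T) (_ : I ≤ p.asIdeal), Order.height p

/-- `T` is equidimensional: `dim (T/p) = dim T` for every minimal prime `p`. -/
def IsEquidim (T : Type*) [CommRing T] : Prop :=
  ∀ p ∈ minimalPrimes T, ringKrullDim (T ⧸ p) = ringKrullDim T

/-- `depth T > 1`: there is a regular sequence of length two inside the maximal ideal. -/
def DepthGTOne (T : Type*) [CommRing T] [IsLocalRing T] : Prop :=
  ∃ x y : T, x ∈ maximalIdeal T ∧ y ∈ maximalIdeal T ∧ x ∈ nonZeroDivisors T ∧
    Ideal.Quotient.mk (Ideal.span {x}) y ∈ nonZeroDivisors (T ⧸ Ideal.span {x})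

/-- A local (Noetherian) unique factorization domain `A` together with an identification
of its `maximalIdeal A`-adic completion with `T`. -/
structure LocalUFDWithCompletion (T : Type u) [CommRing T] : Type (u + 1) where
  /-- the underlying ring -/
  A : Type u
  [commRing : CommRing A]
  [isDomain : IsDomain A]
  [isNoetherian : IsNoetherianRing A]
  [isLocalRing : IsLocalRing A]
  [ufd : UniqueFactorizationMonoid A]
  /-- the natural map from `A` to its completion `T` -/
  toCompletion : A →+* T
  /-- the completion of `A` is `T` -/
  completionEquiv : AdicCompletion (IsLocalRing.maximalIdeal A) A ≃+* T
  completionEquiv_comp : ∀ a : A,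
    completionEquiv (algebraMap A (AdicCompletion (IsLocalRing.maximalIdeal A) A) a) =
      toCompletion a

attribute [instance] LocalUFDWithCompletion.commRing LocalUFDWithCompletion.isDomain
  LocalUFDWithCompletion.isNoetherian LocalUFDWithCompletion.isLocalRing
  LocalUFDWithCompletion.ufd

/-- `α(A, p)`: the Krull dimension of the formal fiber ring `T ⊗_A κ(p)` of `A` at the
prime ideal `p`, where `κ(p) = A_p / p A_p` and `T` is the completion of `A`. -/
noncomputable def alphaAt {T : Type u} [CommRing T] (X : LocalUFDWithCompletion T)
    (p : Ideal X.A) (hp : p.IsPrime) : WithBot ℕ∞ :=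
  letI := X.toCompletion.toAlgebra
  haveI := hp
  ringKrullDim (TensorProduct X.A T
    (Localization.AtPrime p ⧸ IsLocalRing.maximalIdeal (Localization.AtPrime p)))

/-- Avoidance lemma. -/
theorem avoid_generic {T : Type u} [CommRing T] [IsLocalRing T] [IsNoetherianRing T]
    (R : Subring T) (J : Ideal T) (C : Set (Ideal T × T × T)) (μ : Cardinal.{u})
    (hμ : ℵ₀ ≤ μ) (hμ' : μ < #(ResidueField T)) (hR : #R ≤ μ) (hC : #C ≤ μ)
    (hC1 : ∀ c ∈ C, c.1.IsPrime ∧ ¬ J ≤ c.1 ∧ c.2.2 ∉ c.1) :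
    ∃ u ∈ J, ∀ c ∈ C, ∀ f : Polynomial R,
      Polynomial.aeval (c.2.1 + c.2.2 * u) f ∈ c.1 → ∀ i, (f.coeff i : T) ∈ c.1 := by
  classical
  obtain ⟨s, hs⟩ := (isNoetherianRing_iff_ideal_fg T).1 inferInstance J
  -- enumerate the generators
  let l := s.toList
  let U : Polynomial T := ∑ i : Fin l.length, Polynomial.monomial (i.1 + 1) (l.get i)
  have hUJ : ∀ v : T, U.eval v ∈ J := by
    intro v
    simp only [U, Polynomial.eval_finsetSum, Polynomial.eval_monomial]
    refine Ideal.sum_mem _ fun i _ => Ideal.mul_mem_right _ _ ?_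
    rw [← hs]
    apply Ideal.subset_span
    have : l.get i ∈ l := List.get_mem _ _
    exact Finset.mem_toList.1 this
  have hUc : ∀ i : Fin l.length, U.coeff (i.1 + 1) = l.get i := by
    intro i
    simp only [U, Polynomial.finsetSum_coeff, Polynomial.coeff_monomial]
    rw [Finset.sum_eq_single i]
    · simp
    · intro j _ hj
      rw [if_neg]
      intro h
      exact hj (Fin.ext (by omega))
    · simp
  let σ : ResidueField T → T := fun v => (residue_surjective v).choose
  have hσ : ∀ v, residue T (σ v) = v := fun v => (residue_surjective v).choose_spec
  let bad : (C × Polynomial R) → Set (ResidueField T) := fun cf =>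
    {v | Polynomial.aeval (cf.1.1.2.1 + cf.1.1.2.2 * U.eval (σ v)) cf.2 ∈ cf.1.1.1 ∧
      ¬ ∀ i, (cf.2.coeff i : T) ∈ cf.1.1.1}
  have hbad : ∀ cf, (bad cf).Finite := by
    rintro ⟨⟨⟨P, a, b⟩, hc⟩, f⟩
    obtain ⟨hP, hJ, hb⟩ := hC1 _ hc
    simp only at hP hJ hb
    by_cases hf : ∀ i, (f.coeff i : T) ∈ P
    · convert Set.finite_empty
      ext v; simp [bad, hf]
    let π := Ideal.Quotient.mk P
    let g : Polynomial (T ⧸ P) := f.map (π.comp R.subtype)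
    let W : Polynomial (T ⧸ P) := Polynomial.C (π a) + Polynomial.C (π b) * U.map π
    have hg : g ≠ 0 := by
      intro h
      apply hf
      intro i
      have := congrArg (fun q => q.coeff i) h
      simp only [g, Polynomial.coeff_map, Polynomial.coeff_zero] at this
      exact Ideal.Quotient.eq_zero_iff_mem.1 this
    have hW : W.natDegree ≠ 0 := by
      have : ∃ x ∈ s, x ∉ P := by
        by_contra h
        push Not at h
        exact hJ (by rw [← hs]; exact Ideal.span_le.2 h)
      obtain ⟨x, hx, hxP⟩ := this
      obtain ⟨i, hi⟩ := List.get_of_mem (show x ∈ l by simpa [l] using hx)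
      intro h0
      have : W.coeff (i.1 + 1) = 0 := Polynomial.coeff_eq_zero_of_natDegree_lt (by omega)
      simp only [W, Polynomial.coeff_add, Polynomial.coeff_C_mul, Polynomial.coeff_map, hUc,
        Polynomial.coeff_C, hi] at this
      simp only [Nat.add_eq_zero_iff, one_ne_zero, and_false, if_false, zero_add] at this
      rcases mul_eq_zero.1 this with h | h
      · exact hb (Ideal.Quotient.eq_zero_iff_mem.1 h)
      · exact hxP (Ideal.Quotient.eq_zero_iff_mem.1 h)
    have hH : g.comp W ≠ 0 := by
      intro h
      rcases Polynomial.comp_eq_zero_iff.1 h with h | h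
      · exact hg h
      · apply hW
        rw [h.2]; simp
    have hinj : Function.Injective (fun v => π (σ v)) := by
      intro v w h
      have h1 : σ v - σ w ∈ P := Ideal.Quotient.eq.1 h
      have h2 := le_maximalIdeal hP.ne_top h1
      rw [← hσ v, ← hσ w, ← sub_eq_zero, ← map_sub]
      exact (residue_eq_zero_iff _).2 h2
    refine Set.Finite.of_finite_image (f := fun v => π (σ v)) ?_ hinj.injOn
    refine Set.Finite.subset (g.comp W).roots.toFinset.finite_toSet ?_
    rintro _ ⟨v, ⟨hv, _⟩, rfl⟩
    simp only [Finset.mem_coe, Multiset.mem_toFinset, Polynomial.mem_roots hH,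
      Polynomial.IsRoot.def, Polynomial.eval_comp]
    have := Ideal.Quotient.eq_zero_iff_mem.2 hv
    simp only at this
    rw [← this]
    simp only [g, W, Polynomial.eval_add, Polynomial.eval_mul, Polynomial.eval_C,
      Polynomial.eval_map, Polynomial.aeval_def, Polynomial.hom_eval₂, Polynomial.eval₂_at_apply,
      map_add, map_mul]
    rfl
  have hcard : #(⋃ cf, bad cf) < #(ResidueField T) := by
    refine lt_of_le_of_lt (mk_iUnion_le _) (lt_of_le_of_lt ?_ hμ')
    have h1 : #(C × Polynomial R) ≤ μ := by
      rw [mk_prod, lift_id, lift_id]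
      refine (mul_le_mul' hC (Polynomial.cardinalMk_le_max.trans (max_le hR hμ))).trans ?_
      rw [mul_eq_self hμ]
    refine (mul_le_mul' h1 (ciSup_le' (a := μ) fun cf => ?_)).trans (mul_eq_self hμ).le
    exact (lt_aleph0_iff_set_finite.2 (hbad cf)).le.trans hμ
  obtain ⟨v, hv⟩ : ∃ v, v ∉ ⋃ cf, bad cf := by
    by_contra h
    push Not at h
    rw [Set.eq_univ_of_forall h, mk_univ] at hcard
    exact lt_irrefl _ hcard
  refine ⟨U.eval (σ v), hUJ _, fun c hc f hf => ?_⟩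
  by_contra h
  exact hv (Set.mem_iUnion.2 ⟨⟨⟨c, hc⟩, f⟩, hf, h⟩)

theorem dim_quot_eq_coheight {R : Type*} [CommRing R] (P : PrimeSpectrum R) :
    ringKrullDim (R ⧸ P.asIdeal) = (Order.coheight P : ℕ∞) := by
  rw [ringKrullDim_quotient, Order.coheight_eq_krullDim_Ici]
  have : PrimeSpectrum.zeroLocus (P.asIdeal : Set R) = Set.Ici P := by
    ext Q; rfl
  rw [this]

theorem natCast_le_coe {n : ℕ} {x : ℕ∞} :
    (n : WithBot ℕ∞) ≤ (x : WithBot ℕ∞) ↔ (n : ℕ∞) ≤ x :=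
  WithBot.coe_le_coe (a := (n : ℕ∞))

theorem withBot_cancel {k : ℕ} {x : WithBot ℕ∞} (h : (k : WithBot ℕ∞) + 1 ≤ x + 1) :
    (k : WithBot ℕ∞) ≤ x := by
  induction x with
  | bot => simp at h
  | coe x =>
    have h' : ((k : ℕ∞) + 1) ≤ x + 1 := by exact_mod_cast h
    have : (k : ℕ∞) ≤ x := (ENat.add_le_add_iff_right (by simp)).1 h'
    exact_mod_cast this

theorem exists_minprime_coheight {R : Type*} [CommRing R] [IsLocalRing R] [IsNoetherianRing R]
    (z : R) (hz : z ∈ maximalIdeal R) (k : ℕ) (hk : ((k + 1 : ℕ) : WithBot ℕ∞) ≤ ringKrullDim R) :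
    ∃ p : PrimeSpectrum R, p.asIdeal ∈ (Ideal.span {z}).minimalPrimes ∧
      (k : ℕ∞) ≤ Order.coheight p := by
  have h1 := ringKrullDim_le_ringKrullDim_quotient_add_card ({z} : Finset R) (by
    rw [IsLocalRing.ringJacobson_eq_maximalIdeal]; simpa using hz)
  have h2 : (k : WithBot ℕ∞) ≤ ringKrullDim (R ⧸ Ideal.span {z}) := by
    have h3 := hk.trans h1
    simp only [Finset.card_singleton] at h3
    rw [Finset.coe_singleton] at h3
    push_cast at h3
    exact withBot_cancel h3
  rw [ringKrullDim_quotient, Order.le_krullDim_iff] at h2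
  obtain ⟨l, hl⟩ := h2
  have hle : Ideal.span {z} ≤ l.head.1.asIdeal := l.head.2
  obtain ⟨p, hp, hp'⟩ := Ideal.exists_minimalPrimes_le hle
  refine ⟨⟨p, hp.1.1⟩, hp, ?_⟩
  let l' : LTSeries (PrimeSpectrum R) := l.map Subtype.val (fun a b h => h)
  have : (l'.length : ℕ∞) ≤ Order.coheight (⟨p, hp.1.1⟩ : PrimeSpectrum R) :=
    Order.length_le_coheight (by exact hp')
  rw [← hl]; exact this

theorem exists_avoid_domain {D : Type u} [CommRing D] [IsDomain D] [IsLocalRing D]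
    [IsNoetherianRing D] (S : Set D) (μ : Cardinal.{u}) (hμ : ℵ₀ ≤ μ)
    (hμ' : μ < #(ResidueField D)) (hS : #S ≤ μ) (hS0 : (0 : D) ∉ S) (j : ℕ)
    (hj : ((j + 2 : ℕ) : WithBot ℕ∞) ≤ ringKrullDim D) :
    ∃ p : PrimeSpectrum D, p.asIdeal ≠ ⊥ ∧ (∀ s ∈ S, s ∉ p.asIdeal) ∧
      ((j + 1 : ℕ) : ℕ∞) ≤ Order.coheight p := by
  have hm : maximalIdeal D ≠ ⊥ := by
    intro h
    have h1 := IsLocalRing.maximalIdeal_height_eq_ringKrullDim (R := D)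
    rw [h, Ideal.height_bot] at h1
    rw [← h1] at hj
    have : j + 2 ≤ 0 := by exact_mod_cast natCast_le_coe.1 hj
    simp at this
  obtain ⟨x, hxm, hx0⟩ := Submodule.exists_mem_ne_zero_of_ne_bot hm
  have hfin := Ideal.finite_minimalPrimes_of_isNoetherianRing D (Ideal.span {x})
  obtain ⟨y, hym, hy⟩ : ∃ y ∈ maximalIdeal D, ∀ p ∈ (Ideal.span {x}).minimalPrimes, y ∉ p := by
    by_contra hcon
    push Not at hcon
    have hsub : (maximalIdeal D : Set D) ⊆ ⋃ p ∈ (Ideal.span {x}).minimalPrimes, (p : Set D) := by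
      intro y hy
      obtain ⟨p, hp, hyp⟩ := hcon y hy
      exact Set.mem_biUnion hp hyp
    rw [Ideal.subset_union_prime_finite hfin ⊥ ⊥ (fun p hp _ _ => hp.1.1)] at hsub
    obtain ⟨p, hp, hle⟩ := hsub
    have hp1 := Ideal.height_le_one_of_isPrincipal_of_mem_minimalPrimes _ p hp
    have h1 := IsLocalRing.maximalIdeal_height_eq_ringKrullDim (R := D)
    have h2 : ringKrullDim D ≤ (1 : ℕ∞) := by
      rw [← h1]; exact_mod_cast (Ideal.height_mono hle).trans hp1
    have h3 := hj.trans h2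
    have : j + 2 ≤ 1 := by exact_mod_cast natCast_le_coe.1 h3
    omega
  obtain ⟨σ, hσ⟩ : ∃ σ : ResidueField D → D, ∀ v, residue D (σ v) = v :=
    ⟨Function.surjInv residue_surjective, Function.surjInv_eq _⟩
  have hex : ∀ v, ∃ p : PrimeSpectrum D, p.asIdeal ∈ (Ideal.span {y + σ v * x}).minimalPrimes ∧
      ((j + 1 : ℕ) : ℕ∞) ≤ Order.coheight p := fun v =>
    exists_minprime_coheight _ (Ideal.add_mem _ hym (Ideal.mul_mem_left _ _ hxm)) (j + 1) hj
  choose P hP hPc using hex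
  have hh : ∀ v, (P v).asIdeal.height ≤ 1 := fun v =>
    Ideal.height_le_one_of_isPrincipal_of_mem_minimalPrimes _ _ (hP v)
  -- containing a nonzero element makes it minimal over it
  have hmin : ∀ v s, s ≠ 0 → s ∈ (P v).asIdeal → (P v).asIdeal ∈ (Ideal.span {s}).minimalPrimes := by
    intro v s hs0 hs
    refine Ideal.mem_minimalPrimes_of_height_le ((Ideal.span_singleton_le_iff_mem _).2 hs) ?_
    exact (hh v).trans
      (Ideal.one_le_height_span_singleton_of_mem_nonZeroDivisors (mem_nonZeroDivisors_of_ne_zero hs0))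
  have hmemP : ∀ v, y + σ v * x ∈ (P v).asIdeal := fun v =>
    (hP v).1.2 (Ideal.mem_span_singleton_self _)
  have hinj : Function.Injective P := by
    intro v w hvw
    by_contra hne
    have h1 := hmemP v
    have h2 := hmemP w
    rw [← hvw] at h2
    have h3 : (σ v - σ w) * x ∈ (P v).asIdeal := by
      have := Ideal.sub_mem _ h1 h2
      convert this using 1; ring
    have hu : IsUnit (σ v - σ w) := by
      rw [← IsLocalRing.residue_ne_zero_iff_isUnit, map_sub, hσ, hσ, sub_ne_zero]
      exact hne
    have hx : x ∈ (P v).asIdeal := (Ideal.unit_mul_mem_iff_mem _ hu).1 h3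
    have hyP : y ∈ (P v).asIdeal := by
      have := Ideal.sub_mem _ h1 (Ideal.mul_mem_left _ (σ v) hx)
      simpa using this
    exact hy _ (hmin v x hx0 hx) hyP
  let bad : S → Set (ResidueField D) := fun s => {v | (s : D) ∈ (P v).asIdeal}
  have hbad : ∀ s, (bad s).Finite := by
    intro s
    have hs0 : (s : D) ≠ 0 := fun h => hS0 (h ▸ s.2)
    have hf := Ideal.finite_minimalPrimes_of_isNoetherianRing D (Ideal.span {(s : D)})
    refine Set.Finite.of_finite_image (f := fun v => (P v).asIdeal) (hf.subset ?_) ?_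
    · rintro _ ⟨v, hv, rfl⟩
      exact hmin v _ hs0 hv
    · intro v _ w _ h
      exact hinj (PrimeSpectrum.ext h)
  have hcard : #(⋃ s, bad s) < #(ResidueField D) := by
    refine lt_of_le_of_lt (mk_iUnion_le _) (lt_of_le_of_lt ?_ hμ')
    refine (mul_le_mul' hS (ciSup_le' (a := μ) fun s => ?_)).trans (mul_eq_self hμ).le
    exact (lt_aleph0_iff_set_finite.2 (hbad s)).le.trans hμ
  obtain ⟨v, hv⟩ : ∃ v, v ∉ ⋃ s, bad s := by
    by_contra h
    push Not at h
    rw [Set.eq_univ_of_forall h, mk_univ] at hcard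
    exact lt_irrefl _ hcard
  refine ⟨P v, ?_, fun s hs hsP => hv (Set.mem_iUnion.2 ⟨⟨s, hs⟩, hsP⟩), hPc v⟩
  intro hbot
  have h1 := hmemP v
  rw [hbot, Ideal.mem_bot] at h1
  have hall : ∀ p ∈ (Ideal.span {x}).minimalPrimes, y ∈ p := by
    intro p hp
    have : y = -(σ v) * x := by linear_combination h1
    rw [this]
    exact Ideal.mul_mem_left _ _ (hp.1.2 (Ideal.mem_span_singleton_self _))
  obtain ⟨p, hp, -⟩ := Ideal.exists_minimalPrimes_le
    ((Ideal.span_singleton_le_iff_mem _).2 hxm : Ideal.span {x} ≤ maximalIdeal D)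
  exact hy p hp (hall p hp)

theorem climb_step {T : Type u} [CommRing T] [IsLocalRing T] [IsNoetherianRing T]
    (S : Set T) (μ : Cardinal.{u}) (hμ : ℵ₀ ≤ μ) (hμ' : μ < #(ResidueField T)) (hS : #S ≤ μ)
    (P : PrimeSpectrum T) (hP : ∀ s ∈ S, s ∉ P.asIdeal) (j : ℕ)
    (hj : ((j + 2 : ℕ) : ℕ∞) ≤ Order.coheight P) :
    ∃ Q : PrimeSpectrum T, P < Q ∧ (∀ s ∈ S, s ∉ Q.asIdeal) ∧
      ((j + 1 : ℕ) : ℕ∞) ≤ Order.coheight Q := by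
  have hnt : Nontrivial (T ⧸ P.asIdeal) := Ideal.Quotient.nontrivial_iff.2 P.2.ne_top
  have : IsLocalRing (T ⧸ P.asIdeal) :=
    IsLocalRing.of_surjective' (Ideal.Quotient.mk P.asIdeal) Ideal.Quotient.mk_surjective
  have : IsLocalHom (Ideal.Quotient.mk P.asIdeal) :=
    Ideal.Quotient.mk_surjective.isLocalHom
  have hinj : #(ResidueField T) ≤ #(ResidueField (T ⧸ P.asIdeal)) :=
    mk_le_of_injective (f := ResidueField.map (Ideal.Quotient.mk P.asIdeal))
      (RingHom.injective _)
  obtain ⟨p, hp0, hpS, hpc⟩ := exists_avoid_domain (D := T ⧸ P.asIdeal)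
    ((Ideal.Quotient.mk P.asIdeal) '' S) μ hμ (hμ'.trans_le hinj) (mk_image_le.trans hS)
    (by
      rintro ⟨s, hs, h0⟩
      exact hP s hs (Ideal.Quotient.eq_zero_iff_mem.1 h0)) j
    (by rw [dim_quot_eq_coheight]; exact natCast_le_coe.2 hj)
  let e := P.asIdeal.primeSpectrumQuotientOrderIsoZeroLocus
  refine ⟨p.comap (Ideal.Quotient.mk P.asIdeal), ?_, ?_, ?_⟩
  · refine lt_of_le_of_ne ?_ ?_
    · intro t ht
      change Ideal.Quotient.mk P.asIdeal t ∈ p.asIdeal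
      rw [Ideal.Quotient.eq_zero_iff_mem.2 ht]; exact Ideal.zero_mem _
    · intro h
      apply hp0
      rw [eq_bot_iff]
      intro t ht
      obtain ⟨t, rfl⟩ := Ideal.Quotient.mk_surjective t
      have : t ∈ (p.comap (Ideal.Quotient.mk P.asIdeal)).asIdeal := ht
      rw [← h] at this
      exact Ideal.Quotient.eq_zero_iff_mem.2 this
  · intro s hs h
    exact hpS _ ⟨s, hs, rfl⟩ h
  · refine hpc.trans ?_
    refine Order.coheight_le_coheight_apply_of_strictMono
      (PrimeSpectrum.comap (Ideal.Quotient.mk P.asIdeal)) ?_ p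
    intro a b hab
    have : (e a) < e b := e.strictMono hab
    exact this

theorem climb {T : Type u} [CommRing T] [IsLocalRing T] [IsNoetherianRing T]
    (S : Set T) (μ : Cardinal.{u}) (hμ : ℵ₀ ≤ μ) (hμ' : μ < #(ResidueField T)) (hS : #S ≤ μ)
    (j k : ℕ) : ∀ (P : PrimeSpectrum T) (_ : ∀ s ∈ S, s ∉ P.asIdeal)
    (_ : ((k + (j + 1) : ℕ) : ℕ∞) ≤ Order.coheight P),
    ∃ l : LTSeries (PrimeSpectrum T), l.length = k ∧ l.head = P ∧
      (∀ s ∈ S, s ∉ l.last.asIdeal) ∧ ((j + 1 : ℕ) : ℕ∞) ≤ Order.coheight l.last := by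
  induction k with
  | zero =>
    intro P hP hc
    exact ⟨RelSeries.singleton _ P, rfl, rfl, hP, by simpa using hc⟩
  | succ k ih =>
    intro P hP hc
    obtain ⟨Q, hPQ, hQ, hQc⟩ := climb_step S μ hμ hμ' hS P hP (k + j) (by
      convert hc using 2; omega)
    obtain ⟨l, hl, hh, hlS, hlc⟩ := ih Q hQ (by rw [← add_assoc]; exact hQc)
    refine ⟨l.cons P (by rw [hh]; exact hPQ), by simp [hl], by simp, ?_, ?_⟩
    · simpa using hlS
    · simpa using hlc

theorem height_add_coheight_le {R : Type*} [CommRing R] (P : PrimeSpectrum R) :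
    ((Order.height P + Order.coheight P : ℕ∞) : WithBot ℕ∞) ≤ ringKrullDim R := by
  have : Nonempty (PrimeSpectrum R) := ⟨P⟩
  rw [ringKrullDim, Order.krullDim_eq_iSup_height_add_coheight_of_nonempty]
  exact_mod_cast le_iSup (fun a : PrimeSpectrum R => Order.height a + Order.coheight a) P

section Core
variable {T : Type u} [CommRing T]

/-- `r` is a nonzerodivisor modulo `p`. -/
def Reg (p r : T) : Prop := ∀ t, p ∣ r * t → p ∣ t

theorem Reg.mul {p a b : T} (ha : Reg p a) (hb : Reg p b) : Reg p (a * b) := fun t ht =>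
  hb t (ha _ (by rwa [← mul_assoc]))

theorem Reg.of_isUnit {p a : T} (ha : IsUnit a) : Reg p a := fun t ht => by
  obtain ⟨u, rfl⟩ := ha
  have := Dvd.dvd.mul_left ht (↑u⁻¹ : T)
  simpa [← mul_assoc] using this

theorem Reg.symm {p q : T} (hp : p ∈ nonZeroDivisors T) (h : Reg p q) : Reg q p := by
  rintro t ⟨c, hc⟩
  obtain ⟨c', rfl⟩ := h c ⟨t, hc.symm⟩
  refine ⟨c', ?_⟩
  have : p * t = p * (q * c') := by rw [hc]; ring
  exact (mul_cancel_left_mem_nonZeroDivisors hp).1 this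

/-- The elements of `T` which are fractions over `B`. -/
def Sat (B : Subring T) : Subring T where
  carrier := {s | ∃ a ∈ B, a ∈ nonZeroDivisors T ∧ a * s ∈ B}
  mul_mem' := by
    rintro s t ⟨a, ha, ha', has⟩ ⟨b, hb, hb', hbt⟩
    refine ⟨a * b, B.mul_mem ha hb, mul_mem ha' hb', ?_⟩
    have := B.mul_mem has hbt
    convert this using 1; ring
  one_mem' := ⟨1, B.one_mem, one_mem _, by simp [B.one_mem]⟩
  add_mem' := by
    rintro s t ⟨a, ha, ha', has⟩ ⟨b, hb, hb', hbt⟩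
    refine ⟨a * b, B.mul_mem ha hb, mul_mem ha' hb', ?_⟩
    have := B.add_mem (B.mul_mem hb has) (B.mul_mem ha hbt)
    convert this using 1; ring
  zero_mem' := ⟨1, B.one_mem, one_mem _, by simp [B.zero_mem]⟩
  neg_mem' := by
    rintro s ⟨a, ha, ha', has⟩
    exact ⟨a, ha, ha', by simpa using has⟩

theorem mem_Sat {B : Subring T} {s : T} :
    s ∈ Sat B ↔ ∃ a ∈ B, a ∈ nonZeroDivisors T ∧ a * s ∈ B := Iff.rfl

theorem le_Sat (B : Subring T) : B ≤ Sat B := fun s hs =>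
  ⟨1, B.one_mem, one_mem _, by simpa using hs⟩

theorem Sat_mono {B C : Subring T} (h : B ≤ C) : Sat B ≤ Sat C := by
  rintro s ⟨a, ha, ha', has⟩
  exact ⟨a, h ha, ha', h has⟩

theorem Sat_Sat_le (B : Subring T) : Sat (Sat B) ≤ Sat B := by
  rintro s ⟨a, ⟨b, hb, hb', hba⟩, ha', ⟨c, hc, hc', hcs⟩⟩
  refine ⟨c * (b * a), B.mul_mem hc hba, mul_mem hc' (mul_mem hb' ha'), ?_⟩
  have := B.mul_mem hb hcs
  convert this using 1; ring

theorem mk_Sat_le (B : Subring T) (μ : Cardinal.{u}) (hμ : ℵ₀ ≤ μ) (hB : #B ≤ μ) :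
    #(Sat B) ≤ μ := by
  choose a ha ha' has using fun s : Sat B => s.2
  have : Function.Injective (fun s : Sat B => ((⟨a s, ha s⟩ : B), (⟨a s * s, has s⟩ : B))) := by
    intro s t h
    simp only [Prod.mk.injEq, Subtype.mk.injEq] at h
    obtain ⟨h1, h2⟩ := h
    rw [h1] at h2
    exact Subtype.ext ((mul_cancel_left_mem_nonZeroDivisors (ha' t)).1 h2)
  refine (mk_le_of_injective this).trans ?_
  rw [mk_prod, lift_id]
  exact (mul_le_mul' hB hB).trans (mul_eq_self hμ).le

/-- `R[x]` -/
noncomputable def adj (R : Subring T) (x : T) : Subring T :=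
  (Polynomial.aeval (R := R) x).toRingHom.range

theorem mem_adj {R : Subring T} {x t : T} :
    t ∈ adj R x ↔ ∃ f : Polynomial R, Polynomial.aeval x f = t := Iff.rfl

theorem le_adj (R : Subring T) (x : T) : R ≤ adj R x := fun r hr =>
  ⟨Polynomial.C ⟨r, hr⟩, by simp; rfl⟩

theorem self_mem_adj (R : Subring T) (x : T) : x ∈ adj R x :=
  ⟨Polynomial.X, by simp⟩

theorem adj_le {R S : Subring T} {x : T} (h : R ≤ S) (hx : x ∈ S) : adj R x ≤ S := by
  rintro _ ⟨f, rfl⟩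
  change Polynomial.aeval x f ∈ S
  rw [Polynomial.aeval_eq_sum_range]
  refine S.sum_mem fun i _ => ?_
  rw [Algebra.smul_def]
  exact S.mul_mem (h (f.coeff i).2) (S.pow_mem hx i)

theorem mk_adj_le (R : Subring T) (x : T) (μ : Cardinal.{u}) (hμ : ℵ₀ ≤ μ) (hR : #R ≤ μ) :
    #(adj R x) ≤ μ := by
  refine (mk_le_of_surjective (f := fun f : Polynomial R =>
    (⟨Polynomial.aeval x f, f, rfl⟩ : adj R x)) ?_).trans
    (Polynomial.cardinalMk_le_max.trans (max_le hR hμ))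
  rintro ⟨_, f, rfl⟩
  exact ⟨f, rfl⟩

/-- A mark at `p`. -/
def GoodQ (d : ℕ) (p : T) (Q : Ideal T) : Prop :=
  ∃ l : LTSeries (PrimeSpectrum T), l.length = d - 1 ∧ p ∈ l.head.asIdeal ∧
    l.last.asIdeal = Q ∧ Order.height l.last ≤ (d : ℕ∞)

/-- Good subrings. -/
structure St [IsLocalRing T] (d : ℕ) (Q0 : Ideal T) (R : Subring T) (M : Set (T × Ideal T)) :
    Prop where
  sat : ∀ a ∈ R, a ≠ 0 → ∀ s, a * s ∈ R → s ∈ R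
  reg : ∀ a ∈ R, a ≠ 0 → a ∈ nonZeroDivisors T
  gen : ∀ a ∈ R, a ∈ Q0 → a = 0
  mem : ∀ c ∈ M, c.1 ∈ R ∧ c.1 ≠ 0 ∧ c.1 ∈ maximalIdeal T ∧ GoodQ d c.1 c.2
  regp : ∀ c ∈ M, ∀ r ∈ R, ¬ c.1 ∣ r → Reg c.1 r ∧ r ∉ c.2
  fac : ∀ r ∈ R, r ≠ 0 → r ∈ maximalIdeal T → ∃ c ∈ M, c.1 ∣ r

/-- genericity at a mark -/
def GenP (R : Subring T) (x p : T) (Q : Ideal T) : Prop :=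
  ∀ f : Polynomial R, (∀ i, p ∣ (f.coeff i : T)) ∨
    (Reg p (Polynomial.aeval x f) ∧ Polynomial.aeval x f ∉ Q)

/-- genericity at the zero ideal -/
def Gen0 (R : Subring T) (x : T) (Q0 : Ideal T) : Prop :=
  ∀ f : Polynomial R, f ≠ 0 →
    Polynomial.aeval x f ∈ nonZeroDivisors T ∧ Polynomial.aeval x f ∉ Q0

theorem lt_span_of_mul [IsLocalRing T] {p a : T} (hp : p ∈ maximalIdeal T) (ha : a ≠ 0) :
    Ideal.span {p * a} < Ideal.span {a} := by
  refine lt_of_le_of_ne (Ideal.span_singleton_le_span_singleton.2 (dvd_mul_left _ _)) ?_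
  intro h
  have h1 : p * a ∣ a := Ideal.span_singleton_le_span_singleton.1 h.ge
  obtain ⟨c, hc⟩ := h1
  have hu : IsUnit (1 - p * c) := by
    by_contra hn
    have h2 : 1 - p * c ∈ maximalIdeal T := (mem_maximalIdeal _).2 hn
    have h3 := Ideal.add_mem _ h2 (Ideal.mul_mem_right c _ hp)
    simp only [sub_add_cancel] at h3
    exact (Ideal.ne_top_iff_one _).1 (maximalIdeal.isMaximal T).ne_top h3
  apply ha
  refine (hu.mul_right_eq_zero).1 ?_
  linear_combination hc

theorem St.induct [IsLocalRing T] [IsNoetherianRing T] {d : ℕ} {Q0 : Ideal T} {R : Subring T}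
    {M : Set (T × Ideal T)} (h : St d Q0 R M) {motive : T → Prop}
    (hunit : ∀ r ∈ R, IsUnit r → motive r)
    (hmul : ∀ c ∈ M, ∀ r ∈ R, r ≠ 0 → motive r → motive (c.1 * r)) :
    ∀ r ∈ R, r ≠ 0 → motive r := by
  suffices H : ∀ I : Ideal T, ∀ r ∈ R, r ≠ 0 → Ideal.span {r} = I → motive r from
    fun r hr h0 => H _ r hr h0 rfl
  intro I
  induction I using WellFoundedGT.induction with
  | ind I ih =>
  rintro r hr h0 rfl
  by_cases hu : IsUnit r
  · exact hunit r hr hu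
  obtain ⟨c, hc, ⟨r1, rfl⟩⟩ := h.fac r hr h0 ((mem_maximalIdeal _).2 hu)
  obtain ⟨hcR, hc0, hcm, -⟩ := h.mem c hc
  have h1 : r1 ∈ R := h.sat _ hcR hc0 _ hr
  have h10 : r1 ≠ 0 := by rintro rfl; simp at h0
  exact hmul c hc r1 h1 h10 (ih _ (lt_span_of_mul hcm h10) r1 h1 h10 rfl)

theorem exists_mark [IsLocalRing T] [IsNoetherianRing T] (d n : ℕ) (hd1 : 1 ≤ d) (hdn : d + 1 ≤ n)
    (hn : ringKrullDim T = n) (μ : Cardinal.{u}) (hμ : ℵ₀ ≤ μ) (hμ' : μ < #(ResidueField T))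
    (S : Set T) (hS : #S ≤ μ) (q : T) (hqm : q ∈ maximalIdeal T)
    (hq : ∀ s ∈ S, ¬ q ∣ s → Reg q s) :
    ∃ Q, GoodQ d q Q ∧ ∀ s ∈ S, ¬ q ∣ s → s ∉ Q := by
  obtain ⟨P, hP, hPc⟩ := exists_minprime_coheight q hqm (n - 1) (by
    rw [hn, Nat.sub_add_cancel (by omega)])
  obtain ⟨l, hl, hlh, hlS, hlc⟩ := climb {s ∈ S | ¬ q ∣ s} μ hμ hμ'
    ((mk_le_mk_of_subset (Set.sep_subset _ _)).trans hS) (n - d - 1) (d - 1) P (by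
      rintro s ⟨hs, hqs⟩ hsP
      obtain ⟨t, ht, hk⟩ := Ideal.exists_mul_mem_of_mem_minimalPrimes hP hsP
      exact ht (Ideal.mem_span_singleton.2 (hq s hs hqs t (Ideal.mem_span_singleton.1 hk)))) (by
      convert hPc using 2; omega)
  refine ⟨l.last.asIdeal, ⟨l, hl, ?_, rfl, ?_⟩, fun s hs hqs => hlS s ⟨hs, hqs⟩⟩
  · rw [hlh]; exact hP.1.2 (Ideal.mem_span_singleton_self q)
  · have h1 := height_add_coheight_le l.last
    rw [hn] at h1
    have h2 : Order.height l.last + Order.coheight l.last ≤ (n : ℕ∞) := WithBot.coe_le_coe.1 h1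
    have h3 := (add_le_add_right hlc (Order.height l.last)).trans h2
    have h4 : Order.height l.last ≠ ⊤ := by
      rintro h; rw [h] at h3; simp at h3
    obtain ⟨a, ha⟩ := ENat.ne_top_iff_exists.1 h4
    rw [← ha] at h3 ⊢
    have h5 : a + (n - d - 1 + 1) ≤ n := by exact_mod_cast h3
    exact_mod_cast (by omega : a ≤ d)

theorem marking [IsLocalRing T] [IsNoetherianRing T] (d n : ℕ) (hd1 : 1 ≤ d) (hdn : d + 1 ≤ n)
    (hn : ringKrullDim T = n) (μ : Cardinal.{u}) (hμ : ℵ₀ ≤ μ) (hμ' : μ < #(ResidueField T))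
    (Q0 : Ideal T) (S : Subring T) (hS : #S ≤ μ) (M : Set (T × Ideal T)) (hM : #M ≤ μ)
    (sat : ∀ a ∈ S, a ≠ 0 → ∀ s, a * s ∈ S → s ∈ S)
    (reg : ∀ a ∈ S, a ≠ 0 → a ∈ nonZeroDivisors T)
    (gen : ∀ a ∈ S, a ∈ Q0 → a = 0)
    (mem : ∀ c ∈ M, c.1 ∈ S ∧ c.1 ≠ 0 ∧ c.1 ∈ maximalIdeal T ∧ GoodQ d c.1 c.2)
    (regp : ∀ c ∈ M, ∀ r ∈ S, ¬ c.1 ∣ r → Reg c.1 r ∧ r ∉ c.2)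
    (hnew : ∀ q ∈ S, q ≠ 0 → q ∈ maximalIdeal T →
      (∀ a ∈ S, ∀ b ∈ S, q = a * b → IsUnit a ∨ IsUnit b) → (∀ c ∈ M, ¬ c.1 ∣ q) →
      ∀ s ∈ S, ¬ q ∣ s → Reg q s) :
    ∃ M', M ⊆ M' ∧ #M' ≤ μ ∧ St d Q0 S M' := by
  let N : Set T := {q | q ∈ S ∧ q ≠ 0 ∧ q ∈ maximalIdeal T ∧
      (∀ a ∈ S, ∀ b ∈ S, q = a * b → IsUnit a ∨ IsUnit b) ∧ (∀ c ∈ M, ¬ c.1 ∣ q)}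
  have hex : ∀ q : N, ∃ Q, GoodQ d (q : T) Q ∧ ∀ s ∈ S, ¬ (q : T) ∣ s → s ∉ Q := by
    rintro ⟨q, hqS, hq0, hqm, hqi, hqM⟩
    exact exists_mark d n hd1 hdn hn μ hμ hμ' (S : Set T) hS q hqm
      (hnew q hqS hq0 hqm hqi hqM)
  choose Q hQ hQ' using hex
  refine ⟨M ∪ Set.range (fun q : N => ((q : T), Q q)), Set.subset_union_left, ?_, ?_⟩
  · refine (mk_union_le _ _).trans ((add_le_add hM (mk_range_le.trans ?_)).trans
      (add_eq_self hμ).le)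
    exact (mk_le_mk_of_subset (fun q hq => hq.1 : N ⊆ (S : Set T))).trans hS
  refine ⟨sat, reg, gen, ?_, ?_, ?_⟩
  · rintro c (hc | ⟨q, rfl⟩)
    · exact mem c hc
    · exact ⟨q.2.1, q.2.2.1, q.2.2.2.1, hQ q⟩
  · rintro c (hc | ⟨q, rfl⟩) r hr hcr
    · exact regp c hc r hr hcr
    · obtain ⟨q, hqS, hq0, hqm, hqi, hqM⟩ := q
      exact ⟨hnew q hqS hq0 hqm hqi hqM r hr hcr, hQ' _ r hr hcr⟩
  · intro r hr hr0 hrm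
    let F : Set (Ideal T) := {I | ∃ q ∈ S, q ∈ maximalIdeal T ∧ q ∣ r ∧ Ideal.span {q} = I}
    obtain ⟨I, ⟨q, hqS, hqm, hqr, rfl⟩, hmax⟩ :=
      set_has_maximal_iff_noetherian.2 (inferInstance : IsNoetherian T T) F
        ⟨_, r, hr, hrm, dvd_rfl, rfl⟩
    have hq0 : q ≠ 0 := by rintro rfl; exact hr0 (zero_dvd_iff.1 hqr)
    have hqreg := reg q hqS hq0
    by_cases hold : ∃ c ∈ M, c.1 ∣ q
    · obtain ⟨c, hc, hcq⟩ := hold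
      exact ⟨c, Or.inl hc, hcq.trans hqr⟩
    push Not at hold
    have hqN : q ∈ N := by
      refine ⟨hqS, hq0, hqm, ?_, hold⟩
      intro a ha b hb hab
      by_contra hcon
      push Not at hcon
      have ha' : a ∈ maximalIdeal T := (mem_maximalIdeal _).2 hcon.1
      have hle : Ideal.span {q} ≤ Ideal.span {a} :=
        Ideal.span_singleton_le_span_singleton.2 ⟨b, hab⟩
      have hnl := hmax (Ideal.span {a}) ⟨a, ha, ha', (Dvd.intro _ hab.symm).trans hqr, rfl⟩
      have heq : Ideal.span {a} ≤ Ideal.span {q} := by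
        by_contra hc
        exact hnl (lt_of_le_not_ge hle hc)
      obtain ⟨c, hc⟩ := Ideal.span_singleton_le_span_singleton.1 heq
      apply hcon.2
      have h1 : q * (c * b) = q * 1 := by
        rw [mul_one]; nth_rewrite 2 [hab]; rw [hc]; ring
      have h2 := (mul_cancel_left_mem_nonZeroDivisors hqreg).1 h1
      exact IsUnit.of_mul_eq_one_right _ h2
    exact ⟨_, Or.inr ⟨⟨q, hqN⟩, rfl⟩, hqr⟩

theorem old_prime [IsLocalRing T] [IsNoetherianRing T] {d : ℕ} {Q0 : Ideal T} {R : Subring T}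
    {M : Set (T × Ideal T)} (h : St d Q0 R M) {x : T} (c : T × Ideal T) (hc : c ∈ M)
    (hx : GenP R x c.1 c.2) (s : T) (hs : s ∈ Sat (adj R x)) (hcs : ¬ c.1 ∣ s) :
    Reg c.1 s ∧ s ∉ c.2 := by
  obtain ⟨hcR, hc0, hcm, l, -, -, hcQ, -⟩ := h.mem c hc
  have hcreg := h.reg _ hcR hc0
  have hdiv : ∀ f : Polynomial R, (∀ i, c.1 ∣ (f.coeff i : T)) →
      ∃ g : Polynomial R, f = Polynomial.C ⟨c.1, hcR⟩ * g := by
    intro f hf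
    refine (Polynomial.C_dvd_iff_dvd_coeff _ _).2 fun i => ?_
    obtain ⟨t, ht⟩ := hf i
    have htR : t ∈ R := h.sat _ hcR hc0 _ (ht ▸ (f.coeff i).2)
    exact ⟨⟨t, htR⟩, Subtype.ext ht⟩
  have hev : ∀ g : Polynomial R, Polynomial.aeval x (Polynomial.C ⟨c.1, hcR⟩ * g) =
      c.1 * Polynomial.aeval x g := by
    intro g
    rw [map_mul, Polynomial.aeval_C]; rfl
  obtain ⟨a, ⟨f, rfl⟩, hf, ⟨g, hg⟩⟩ := hs
  change Polynomial.aeval x f ∈ _ at hf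
  change Polynomial.aeval x g = Polynomial.aeval x f * s at hg
  suffices H : ∀ I : Ideal T, ∀ f g : Polynomial R, Ideal.span {Polynomial.aeval x f} = I →
      Polynomial.aeval x f ∈ nonZeroDivisors T →
      Polynomial.aeval x g = Polynomial.aeval x f * s → Reg c.1 s ∧ s ∉ c.2 from
    H _ f g rfl hf hg
  intro I
  induction I using WellFoundedGT.induction with
  | ind I ih =>
  rintro f g rfl hf hg
  rcases hx f with hf1 | ⟨hf1, hf2⟩
  · obtain ⟨f', rfl⟩ := hdiv f hf1
    rw [hev] at hg hf
    rcases hx g with hg1 | ⟨hg1, hg2⟩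
    · obtain ⟨g', rfl⟩ := hdiv g hg1
      rw [hev, mul_assoc] at hg
      have hg' := (mul_cancel_left_mem_nonZeroDivisors hcreg).1 hg
      have hf' := (mul_mem_nonZeroDivisors.1 hf).2
      have : Nontrivial T := inferInstance
      have hlt := lt_span_of_mul hcm (nonZeroDivisors.ne_zero hf')
      rw [← hev] at hlt
      exact ih _ hlt f' g' rfl hf' hg'
    · have h1 : c.1 ∣ 1 := hg1 1 ⟨Polynomial.aeval x f' * s, by rw [mul_one, hg]; ring⟩
      exact absurd (isUnit_of_dvd_one h1) ((mem_maximalIdeal _).1 hcm)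
  · rcases hx g with hg1 | ⟨hg1, hg2⟩
    · obtain ⟨g', rfl⟩ := hdiv g hg1
      rw [hev] at hg
      exact absurd (hf1 s ⟨_, hg.symm⟩) hcs
    · refine ⟨fun t ht => hg1 t ?_, fun hsQ => hg2 ?_⟩
      · rw [hg, mul_assoc]; exact Dvd.dvd.mul_left ht _
      · rw [hg]; exact Ideal.mul_mem_left _ _ hsQ

theorem poly_bezout {R : Type*} [CommRing R] [IsDomain R] (F G : Polynomial R) :
    ∃ ρ : R, ρ ≠ 0 ∧ ∃ D E1 E2 U V : Polynomial R,
      Polynomial.C ρ * F = D * E1 ∧ Polynomial.C ρ * G = D * E2 ∧ D = U * F + V * G := by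
  classical
  let K := FractionRing R
  let φ : R →+* K := algebraMap R K
  have hφ : Function.Injective φ := IsFractionRing.injective R K
  have hinj := Polynomial.map_injective φ hφ
  have clear : ∀ p : Polynomial K, ∃ b : R, b ≠ 0 ∧ ∀ c : R, ∃ p' : Polynomial R,
      p'.map φ = Polynomial.C (φ (b * c)) * p := by
    intro p
    obtain ⟨b, hb⟩ := IsLocalization.integerNormalization_map_to_map (nonZeroDivisors R) p
    refine ⟨b, nonZeroDivisors.ne_zero b.2, fun c =>
      ⟨Polynomial.C c * IsLocalization.integerNormalization (nonZeroDivisors R) p, ?_⟩⟩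
    rw [Polynomial.map_mul, hb, Polynomial.map_C, Algebra.smul_def, map_mul, map_mul,
      Polynomial.algebraMap_apply]
    ring
  let f := F.map φ
  let g := G.map φ
  let D := EuclideanDomain.gcd f g
  obtain ⟨E1, hE1⟩ := EuclideanDomain.gcd_dvd_left f g
  obtain ⟨E2, hE2⟩ := EuclideanDomain.gcd_dvd_right f g
  have hD := EuclideanDomain.gcd_eq_gcd_ab f g
  obtain ⟨b1, h1, c1⟩ := clear D
  obtain ⟨b2, h2, c2⟩ := clear E1
  obtain ⟨b3, h3, c3⟩ := clear E2
  obtain ⟨b4, h4, c4⟩ := clear (EuclideanDomain.gcdA f g)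
  obtain ⟨b5, h5, c5⟩ := clear (EuclideanDomain.gcdB f g)
  obtain ⟨r, hr⟩ : ∃ r, r = b1 * b2 * b3 * b4 * b5 := ⟨_, rfl⟩
  have hr0 : r ≠ 0 := by rw [hr]; simp [h1, h2, h3, h4, h5]
  obtain ⟨D', hD'⟩ := c1 (b2 * b3 * b4 * b5)
  obtain ⟨E1', hE1'⟩ := c2 (b1 * b3 * b4 * b5)
  obtain ⟨E2', hE2'⟩ := c3 (b1 * b2 * b4 * b5)
  obtain ⟨U, hU⟩ := c4 (b1 * b2 * b3 * b5)
  obtain ⟨V, hV⟩ := c5 (b1 * b2 * b3 * b4)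
  rw [show b1 * (b2 * b3 * b4 * b5) = r by rw [hr]; ring] at hD'
  rw [show b2 * (b1 * b3 * b4 * b5) = r by rw [hr]; ring] at hE1'
  rw [show b3 * (b1 * b2 * b4 * b5) = r by rw [hr]; ring] at hE2'
  rw [show b4 * (b1 * b2 * b3 * b5) = r by rw [hr]; ring] at hU
  rw [show b5 * (b1 * b2 * b3 * b4) = r by rw [hr]; ring] at hV
  refine ⟨r * r, mul_ne_zero hr0 hr0, D', E1', E2', U, V, hinj ?_, hinj ?_, hinj ?_⟩
  · rw [Polynomial.map_mul, Polynomial.map_mul, hD', hE1', Polynomial.map_C, map_mul, map_mul]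
    change _ * f = _
    linear_combination (Polynomial.C (φ r) * Polynomial.C (φ r)) * hE1
  · rw [Polynomial.map_mul, Polynomial.map_mul, hD', hE2', Polynomial.map_C, map_mul, map_mul]
    change _ * g = _
    linear_combination (Polynomial.C (φ r) * Polynomial.C (φ r)) * hE2
  · rw [Polynomial.map_add, Polynomial.map_mul, Polynomial.map_mul, hD', hU, hV]
    change _ = _ * _ * f + _ * _ * g
    linear_combination Polynomial.C (φ r) * hD

end Core

section Core2
variable {T : Type u} [CommRing T]

theorem Reg_of_state [IsLocalRing T] [IsNoetherianRing T] {d : ℕ} {Q0 : Ideal T} {R : Subring T}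
    {M : Set (T × Ideal T)} (h : St d Q0 R M) (q : T) (hq : ∀ c ∈ M, Reg c.1 q) :
    ∀ r ∈ R, r ≠ 0 → Reg q r := by
  refine h.induct (fun r _ hu => Reg.of_isUnit hu) (fun c hc r hr hr0 ih => ?_)
  obtain ⟨hcR, hc0, -, -⟩ := h.mem c hc
  exact (Reg.symm (h.reg _ hcR hc0) (hq c hc)).mul ih

theorem Sat_reg {B : Subring T} (hB : ∀ b ∈ B, b ≠ 0 → b ∈ nonZeroDivisors T) :
    ∀ s ∈ Sat B, s ≠ 0 → s ∈ nonZeroDivisors T := by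
  rintro s ⟨a, ha, ha', has⟩ hs0
  have : a * s ≠ 0 := fun h0 => hs0 ((mul_right_mem_nonZeroDivisors_eq_zero_iff ha').1
    (by rwa [mul_comm]))
  exact (mul_mem_nonZeroDivisors.1 (hB _ has this)).2

theorem Sat_sat {B : Subring T} (hB : ∀ b ∈ B, b ≠ 0 → b ∈ nonZeroDivisors T) :
    ∀ a ∈ Sat B, a ≠ 0 → ∀ s, a * s ∈ Sat B → s ∈ Sat B := fun a ha ha0 s hs =>
  Sat_Sat_le B ⟨a, ha, Sat_reg hB a ha ha0, hs⟩

theorem Sat_gen {B : Subring T} {Q0 : Ideal T} (hB : ∀ b ∈ B, b ∈ Q0 → b = 0) :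
    ∀ s ∈ Sat B, s ∈ Q0 → s = 0 := by
  rintro s ⟨a, ha, ha', has⟩ hs
  have := hB _ has (Ideal.mul_mem_left _ _ hs)
  exact (mul_right_mem_nonZeroDivisors_eq_zero_iff ha').1 (by rwa [mul_comm])

theorem nagata [IsLocalRing T] [IsNoetherianRing T] {d : ℕ} {Q0 : Ideal T} {R S : Subring T}
    {M : Set (T × Ideal T)} (h : St d Q0 R M) (hRS : R ≤ S)
    (sat : ∀ a ∈ S, a ≠ 0 → ∀ s, a * s ∈ S → s ∈ S)
    (old : ∀ c ∈ M, ∀ s ∈ S, ¬ c.1 ∣ s → Reg c.1 s) (q : T) :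
    ∀ ρ ∈ R, ρ ≠ 0 → ∀ a ∈ S, ∀ e ∈ S, ρ * q = a * e →
      ∃ a' ∈ S, ∃ e' ∈ S, ∃ r ∈ R, r ≠ 0 ∧ q = a' * e' ∧ a = r * a' := by
  refine h.induct (fun ρ hρ hu a ha e he heq => ?_) (fun c hc ρ hρ hρ0 ih a ha e he heq => ?_)
  · obtain ⟨u, rfl⟩ := hu
    have hv : (↑u⁻¹ : T) ∈ R := h.sat _ hρ u.ne_zero _ (by simp [R.one_mem])
    refine ⟨a, ha, ↑u⁻¹ * e, S.mul_mem (hRS hv) he, 1, R.one_mem, one_ne_zero, ?_, by simp⟩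
    have : q = ↑u⁻¹ * (↑u * q) := by simp
    rw [this, heq]; ring
  · obtain ⟨hcR, hc0, -, -⟩ := h.mem c hc
    have hcreg := h.reg _ hcR hc0
    by_cases hca : c.1 ∣ a
    · obtain ⟨a1, rfl⟩ := hca
      have ha1 := sat _ (hRS hcR) hc0 _ ha
      have heq' : c.1 * (ρ * q) = c.1 * (a1 * e) := by linear_combination heq
      obtain ⟨a', ha', e', he', r, hr, hr0, h1, h2⟩ :=
        ih a1 ha1 e he ((mul_cancel_left_mem_nonZeroDivisors hcreg).1 heq')
      refine ⟨a', ha', e', he', c.1 * r, R.mul_mem hcR hr, ?_, h1, by rw [h2]; ring⟩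
      intro h0
      exact hr0 ((mul_left_mem_nonZeroDivisors_eq_zero_iff hcreg).1 h0)
    · obtain ⟨e1, rfl⟩ := old c hc a ha hca e ⟨ρ * q, by rw [← heq]; ring⟩
      have he1 := sat _ (hRS hcR) hc0 _ he
      have heq' : c.1 * (ρ * q) = c.1 * (a * e1) := by linear_combination heq
      exact ih a ha e1 he1 ((mul_cancel_left_mem_nonZeroDivisors hcreg).1 heq')

theorem core_step [IsLocalRing T] [IsNoetherianRing T] (d n : ℕ) (hd1 : 1 ≤ d) (hdn : d + 1 ≤ n)
    (hn : ringKrullDim T = n) (μ : Cardinal.{u}) (hμ : ℵ₀ ≤ μ) (hμ' : μ < #(ResidueField T))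
    (Q0 : Ideal T) (R : Subring T) (M : Set (T × Ideal T)) (hR : #R ≤ μ) (hM : #M ≤ μ)
    (h : St d Q0 R M) (S : Subring T)
    (hgen : ∀ c ∈ M, ∃ x, S = Sat (adj R x) ∧ GenP R x c.1 c.2)
    (hgen0 : ∃ x, S = Sat (adj R x) ∧ Gen0 R x Q0) :
    #S ≤ μ ∧ R ≤ S ∧ ∃ M', M ⊆ M' ∧ #M' ≤ μ ∧ St d Q0 S M' := by
  obtain ⟨x, hSx, hx⟩ := hgen0
  have hadjS : adj R x ≤ S := hSx ▸ le_Sat _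
  have hRS : R ≤ S := (le_adj R x).trans hadjS
  have hScard : #S ≤ μ := by
    rw [hSx]; exact mk_Sat_le _ μ hμ (mk_adj_le R x μ hμ hR)
  have hBreg : ∀ b ∈ adj R x, b ≠ 0 → b ∈ nonZeroDivisors T := by
    rintro _ ⟨f, rfl⟩ h0
    exact (hx f (by rintro rfl; simp at h0)).1
  have hBgen : ∀ b ∈ adj R x, b ∈ Q0 → b = 0 := by
    rintro _ ⟨f, rfl⟩ h0
    by_contra hne
    exact (hx f (by rintro rfl; simp at hne)).2 h0
  have sat : ∀ a ∈ S, a ≠ 0 → ∀ s, a * s ∈ S → s ∈ S := by rw [hSx]; exact Sat_sat hBreg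
  have reg : ∀ a ∈ S, a ≠ 0 → a ∈ nonZeroDivisors T := by rw [hSx]; exact Sat_reg hBreg
  have old : ∀ c ∈ M, ∀ r ∈ S, ¬ c.1 ∣ r → Reg c.1 r ∧ r ∉ c.2 := by
    intro c hc r hr hcr
    obtain ⟨y, hSy, hy⟩ := hgen c hc
    exact old_prime h c hc hy r (hSy ▸ hr) hcr
  refine ⟨hScard, hRS, marking d n hd1 hdn hn μ hμ hμ' Q0 S hScard M hM sat reg
    (by rw [hSx]; exact Sat_gen hBgen)
    (fun c hc => ⟨hRS (h.mem c hc).1, (h.mem c hc).2⟩) old ?_⟩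
  intro q hqS hq0 hqm hirr hqM s hsS hqs
  have hqreg := reg q hqS hq0
  -- common denominators
  have hs' := hsS
  have hq' := hqS
  rw [hSx] at hs' hq'
  obtain ⟨a1, ha1, ha1', has⟩ := hs'
  obtain ⟨a2, ha2, ha2', haq⟩ := hq'
  obtain ⟨F, hF⟩ : ∃ F : Polynomial R, Polynomial.aeval x F = a1 * a2 * s :=
    mem_adj.1 (by rw [show a1 * a2 * s = a2 * (a1 * s) by ring]; exact Subring.mul_mem _ ha2 has)
  obtain ⟨G, hG⟩ : ∃ G : Polynomial R, Polynomial.aeval x G = a1 * a2 * q :=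
    mem_adj.1 (by rw [mul_assoc]; exact Subring.mul_mem _ ha1 haq)
  have ha' : a1 * a2 ∈ nonZeroDivisors T := mul_mem ha1' ha2'
  have : NoZeroDivisors R := by
    refine ⟨fun {a b} hab => ?_⟩
    by_contra hcon
    push Not at hcon
    have h1 := h.reg a a.2 (fun h0 => hcon.1 (Subtype.ext h0))
    have h2 : (a : T) * b = 0 := by exact_mod_cast congrArg Subtype.val hab
    exact hcon.2 (Subtype.ext ((mul_left_mem_nonZeroDivisors_eq_zero_iff h1).1 h2))
  have : IsDomain R := NoZeroDivisors.to_isDomain R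
  obtain ⟨ρ, hρ0, D, E1, E2, U, V, h1, h2, h3⟩ := poly_bezout F G
  have hρ0' : (ρ : T) ≠ 0 := fun h0 => hρ0 (Subtype.ext h0)
  have hmem : ∀ f : Polynomial R, Polynomial.aeval x f ∈ S := fun f => hadjS ⟨f, rfl⟩
  set u := Polynomial.aeval x U
  set v := Polynomial.aeval x V
  set e1 := Polynomial.aeval x E1
  set e2 := Polynomial.aeval x E2
  set D' := Polynomial.aeval x D
  have hev : ∀ f : Polynomial R, Polynomial.aeval x (Polynomial.C ρ * f) =
      (ρ : T) * Polynomial.aeval x f := by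
    intro g
    rw [map_mul, Polynomial.aeval_C]; rfl
  have k1 : (ρ : T) * (a1 * a2 * s) = D' * e1 := by
    rw [← hF, ← hev, h1, map_mul]
  have k2 : (ρ : T) * (a1 * a2 * q) = D' * e2 := by
    rw [← hG, ← hev, h2, map_mul]
  have k3 : D' = a1 * a2 * (u * s + v * q) := by
    have : D' = u * Polynomial.aeval x F + v * Polynomial.aeval x G := by
      simp only [D', u, v, ← map_mul, ← map_add, ← h3]
    rw [this, hF, hG]; ring
  have l1 : (ρ : T) * s = (u * s + v * q) * e1 := by
    refine (mul_cancel_left_mem_nonZeroDivisors ha').1 ?_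
    rw [k3] at k1; linear_combination k1
  have l2 : (ρ : T) * q = (u * s + v * q) * e2 := by
    refine (mul_cancel_left_mem_nonZeroDivisors ha').1 ?_
    rw [k3] at k2; linear_combination k2
  have hh : u * s + v * q ∈ S := S.add_mem (S.mul_mem (hmem U) hsS) (S.mul_mem (hmem V) hqS)
  obtain ⟨h', hh', e', he', r, hr, hr0, hqe, hhr⟩ :=
    nagata h hRS sat (fun c hc s hs hcs => (old c hc s hs hcs).1) q ρ ρ.2 hρ0' _ hh e2 (hmem E2) l2
  have hregR := Reg_of_state h q (fun c hc => (old c hc q hqS (hqM c hc)).1)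
  rcases hirr h' hh' e' he' hqe with hu | hu
  · intro t ht
    have h4 : q ∣ (u * s + v * q) * t := by
      rw [show (u * s + v * q) * t = u * (s * t) + q * (v * t) by ring]
      exact dvd_add (Dvd.dvd.mul_left ht _) (dvd_mul_right _ _)
    rw [hhr, mul_assoc] at h4
    exact Reg.of_isUnit hu t (hregR r hr hr0 _ h4)
  · exfalso
    apply hqs
    refine hregR ρ ρ.2 hρ0' s ?_
    rw [l1, hhr]
    have : q ∣ h' := by
      rw [hqe]; exact hu.mul_right_dvd.2 dvd_rfl
    exact Dvd.dvd.mul_right (Dvd.dvd.mul_left this _) _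

theorem base_state [IsLocalRing T] [IsNoetherianRing T] (d n : ℕ) (hd1 : 1 ≤ d) (hdn : d + 1 ≤ n)
    (hn : ringKrullDim T = n) (hμ' : ℵ₀ < #(ResidueField T))
    (hint : ∀ n : ℤ, n ≠ 0 → ((n : ℤ) : T) ∈ nonZeroDivisors T)
    (Q0 : Ideal T) (hQ0 : ∀ n : ℤ, n ≠ 0 → ((n : ℤ) : T) ∉ Q0) :
    ∃ R : Subring T, ∃ M : Set (T × Ideal T), #R ≤ ℵ₀ ∧ #M ≤ ℵ₀ ∧ St d Q0 R M := by
  have hmemB : ∀ b : T, b ∈ (⊥ : Subring T) ↔ ∃ n : ℤ, (n : T) = b := fun b => Subring.mem_bot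
  have hBreg : ∀ b ∈ (⊥ : Subring T), b ≠ 0 → b ∈ nonZeroDivisors T := by
    intro b hb hb0
    obtain ⟨n, rfl⟩ := (hmemB b).1 hb
    exact hint n (by rintro rfl; simp at hb0)
  have hBgen : ∀ b ∈ (⊥ : Subring T), b ∈ Q0 → b = 0 := by
    intro b hb hb0
    obtain ⟨n, rfl⟩ := (hmemB b).1 hb
    by_contra hne
    exact hQ0 n (by rintro rfl; simp at hne) hb0
  have hcard : #(Sat (⊥ : Subring T)) ≤ ℵ₀ := by
    refine mk_Sat_le _ _ le_rfl ?_
    have : Function.Surjective (fun n : ULift.{u} ℤ =>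
        (⟨(n.down : T), (hmemB _).2 ⟨n.down, rfl⟩⟩ : (⊥ : Subring T))) := by
      rintro ⟨b, hb⟩
      obtain ⟨n, rfl⟩ := (hmemB b).1 hb
      exact ⟨⟨n⟩, rfl⟩
    refine (mk_le_of_surjective this).trans ?_
    simp
  have sat := Sat_sat hBreg
  have reg := Sat_reg hBreg
  obtain ⟨M', -, hM', hSt⟩ := marking d n hd1 hdn hn ℵ₀ le_rfl hμ' Q0 (Sat ⊥) hcard ∅ (by simp) sat
    reg (Sat_gen hBgen) (by simp) (by simp) (by
    intro q hqS hq0 hqm hirr _ s hsS hqs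
    have hintS : ∀ n : ℤ, (n : T) ∈ Sat (⊥ : Subring T) := fun n => le_Sat _ ((hmemB _).2 ⟨n, rfl⟩)
    obtain ⟨a1, ha1, ha1', has⟩ := hsS
    obtain ⟨a2, ha2, ha2', haq⟩ := hqS
    obtain ⟨F, hF⟩ : ∃ F : ℤ, (F : T) = a1 * a2 * s :=
      (hmemB _).1 (by rw [show a1 * a2 * s = a2 * (a1 * s) by ring]; exact Subring.mul_mem _ ha2 has)
    obtain ⟨G, hG⟩ : ∃ G : ℤ, (G : T) = a1 * a2 * q :=
      (hmemB _).1 (by rw [mul_assoc]; exact Subring.mul_mem _ ha1 haq)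
    have ha' : a1 * a2 ∈ nonZeroDivisors T := mul_mem ha1' ha2'
    obtain ⟨E1, hE1⟩ := EuclideanDomain.gcd_dvd_left F G
    obtain ⟨E2, hE2⟩ := EuclideanDomain.gcd_dvd_right F G
    have hD := EuclideanDomain.gcd_eq_gcd_ab F G
    generalize EuclideanDomain.gcd F G = D at *
    generalize EuclideanDomain.gcdA F G = U at *
    generalize EuclideanDomain.gcdB F G = V at *
    have k3 : (D : T) = a1 * a2 * (U * s + V * q) := by
      rw [hD]; push_cast; rw [hF, hG]; ring
    have k1 : a1 * a2 * s = D * E1 := by rw [← hF]; exact_mod_cast congrArg (Int.cast (R := T)) hE1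
    have k2 : a1 * a2 * q = D * E2 := by rw [← hG]; exact_mod_cast congrArg (Int.cast (R := T)) hE2
    have l1 : s = (U * s + V * q) * E1 := by
      refine (mul_cancel_left_mem_nonZeroDivisors ha').1 ?_
      rw [k1, k3]; ring
    have l2 : q = (U * s + V * q) * E2 := by
      refine (mul_cancel_left_mem_nonZeroDivisors ha').1 ?_
      rw [k2, k3]; ring
    rcases hirr _ (Subring.add_mem _ (Subring.mul_mem _ (hintS U) ⟨a1, ha1, ha1', has⟩)
      (Subring.mul_mem _ (hintS V) ⟨a2, ha2, ha2', haq⟩)) _ (hintS E2) l2 with hu | hu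
    · intro t ht
      refine Reg.of_isUnit hu t ?_
      rw [show (U * s + V * q) * t = U * (s * t) + q * (V * t) by ring]
      exact dvd_add (Dvd.dvd.mul_left ht _) (dvd_mul_right _ _)
    · exfalso
      apply hqs
      rw [l1]
      refine Dvd.dvd.mul_right ?_ _
      have : q ∣ (U * s + V * q) * E2 := ⟨1, by rw [← l2, mul_one]⟩
      exact hu.dvd_mul_right.1 this)
  exact ⟨_, M', hcard, hM', hSt⟩

end Core2

section Steps
variable {T : Type u} [CommRing T]

/-- The standing hypotheses. -/
structure Setup (T : Type u) [CommRing T] [IsLocalRing T] (d n : ℕ) (Q0 : Ideal T) : Prop where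
  hd1 : 1 ≤ d
  hdn : d + 1 ≤ n
  hn : ringKrullDim T = n
  q0 : Q0.IsPrime
  q0h : Q0.height ≤ ((d - 1 : ℕ) : ℕ∞)
  ass : ∀ p ∈ associatedPrimes T T, p.height ≤ ((d - 1 : ℕ) : ℕ∞)
  assz : ∀ z ∈ nonZeroDivisors T, ∀ Q ∈ associatedPrimes T (T ⧸ Ideal.span {z}),
      Q.height ≤ (d : ℕ∞)

/-- A good state of cardinality at most `μ`. -/
structure Good [IsLocalRing T] (d : ℕ) (Q0 : Ideal T) (μ : Cardinal.{u})
    (X : Subring T × Set (T × Ideal T)) : Prop where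
  card1 : #X.1 ≤ μ
  card2 : #X.2 ≤ μ
  st : St d Q0 X.1 X.2

/-- primes to avoid at zero -/
def bad0 (Q0 : Ideal T) : Set (Ideal T) := associatedPrimes T T ∪ {Q0}

/-- primes to avoid at a mark -/
def bad1 (c : T × Ideal T) : Set (Ideal T) := {c.2} ∪ associatedPrimes T (T ⧸ Ideal.span {c.1})

/-- all primes to avoid -/
def bad (Q0 : Ideal T) (M : Set (T × Ideal T)) : Set (Ideal T) := bad0 Q0 ∪ ⋃ c : M, bad1 c.1

/-- genericity of `x` modulo `P` -/
def GenAt (R : Subring T) (x : T) (P : Ideal T) : Prop :=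
  ∀ f : Polynomial R, Polynomial.aeval x f ∈ P → ∀ i, (f.coeff i : T) ∈ P

theorem Reg_iff [IsNoetherianRing T] (p r : T) :
    Reg p r ↔ ∀ P ∈ associatedPrimes T (T ⧸ Ideal.span {p}), r ∉ P := by
  have h := biUnion_associatedPrimes_eq_zero_divisors T (T ⧸ Ideal.span {p})
  have h1 : (∀ P ∈ associatedPrimes T (T ⧸ Ideal.span {p}), r ∉ P) ↔
      r ∉ ⋃ P ∈ associatedPrimes T (T ⧸ Ideal.span {p}), (P : Set T) := by simp
  rw [h1, h]
  constructor
  · rintro hr ⟨x, hx0, hx⟩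
    obtain ⟨t, rfl⟩ := Ideal.Quotient.mk_surjective x
    apply hx0
    rw [Ideal.Quotient.eq_zero_iff_mem, Ideal.mem_span_singleton]
    apply hr
    rw [← Ideal.mem_span_singleton, ← Ideal.Quotient.eq_zero_iff_mem]
    exact hx
  · intro hr t ht
    by_contra hpt
    apply hr
    refine ⟨Ideal.Quotient.mk _ t, ?_, ?_⟩
    · rw [Ne, Ideal.Quotient.eq_zero_iff_mem, Ideal.mem_span_singleton]; exact hpt
    · change Ideal.Quotient.mk (Ideal.span {p}) (r * t) = 0
      rw [Ideal.Quotient.eq_zero_iff_mem, Ideal.mem_span_singleton]; exact ht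

theorem nzd_iff [IsNoetherianRing T] (r : T) :
    r ∈ nonZeroDivisors T ↔ ∀ P ∈ associatedPrimes T T, r ∉ P := by
  have h := biUnion_associatedPrimes_eq_compl_nonZeroDivisors T
  have h1 : (∀ P ∈ associatedPrimes T T, r ∉ P) ↔
      r ∉ ⋃ P ∈ associatedPrimes T T, (P : Set T) := by simp
  rw [h1, h]; simp

variable [IsLocalRing T] [IsNoetherianRing T] {d n : ℕ} {Q0 : Ideal T} {μ : Cardinal.{u}}

theorem self_mem_bad1 {c : T × Ideal T} (hQ : c.1 ∈ c.2) {P : Ideal T} (hP : P ∈ bad1 c) :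
    c.1 ∈ P := by
  rcases hP with rfl | hP
  · exact hQ
  · refine IsAssociatedPrime.annihilator_le hP ?_
    rw [Submodule.mem_annihilator]
    intro x _
    obtain ⟨t, rfl⟩ := Ideal.Quotient.mk_surjective x
    change Ideal.Quotient.mk (Ideal.span {c.1}) (c.1 * t) = 0
    rw [Ideal.Quotient.eq_zero_iff_mem, Ideal.mem_span_singleton]
    exact dvd_mul_right _ _

theorem GoodQ.mem {p : T} {Q : Ideal T} (h : GoodQ d p Q) : p ∈ Q := by
  obtain ⟨l, -, h1, rfl, -⟩ := h
  exact (LTSeries.head_le_last l : l.head ≤ l.last) h1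

theorem GoodQ.prime {p : T} {Q : Ideal T} (h : GoodQ d p Q) : Q.IsPrime := by
  obtain ⟨l, -, h1, rfl, -⟩ := h
  exact l.last.2

theorem GoodQ.height {p : T} {Q : Ideal T} (h : GoodQ d p Q) : Q.height ≤ (d : ℕ∞) := by
  obtain ⟨l, -, h1, rfl, h2⟩ := h
  rw [PrimeSpectrum.height_eq_orderHeight]; exact h2

theorem bad_prime (hs : Setup T d n Q0) {R : Subring T} {M : Set (T × Ideal T)}
    (h : St d Q0 R M) : ∀ P ∈ bad Q0 M, P.IsPrime := by
  rintro P ((hP | rfl) | hP)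
  · exact hP.isPrime
  · exact hs.q0
  · obtain ⟨⟨c, hc⟩, hP⟩ := Set.mem_iUnion.1 hP
    rcases hP with rfl | hP
    · exact (h.mem c hc).2.2.2.prime
    · exact IsAssociatedPrime.isPrime hP

theorem bad_height (hs : Setup T d n Q0) {R : Subring T} {M : Set (T × Ideal T)}
    (h : St d Q0 R M) : ∀ P ∈ bad Q0 M, P.height ≤ (d : ℕ∞) := by
  have hd : ((d - 1 : ℕ) : ℕ∞) ≤ (d : ℕ∞) := by exact_mod_cast Nat.sub_le d 1
  rintro P ((hP | rfl) | hP)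
  · exact (hs.ass P hP).trans hd
  · exact hs.q0h.trans hd
  · obtain ⟨⟨c, hc⟩, hP⟩ := Set.mem_iUnion.1 hP
    obtain ⟨h1, h2, h3, h4⟩ := h.mem c hc
    rcases hP with rfl | hP
    · exact h4.height
    · exact hs.assz _ (h.reg _ h1 h2) P hP

theorem bad_card (hμ : ℵ₀ ≤ μ) {M : Set (T × Ideal T)} (hM : #M ≤ μ) : #(bad Q0 M) ≤ μ := by
  have hfin : ∀ s : Set (Ideal T), s.Finite → #s ≤ μ := fun s hs =>
    (lt_aleph0_iff_set_finite.2 hs).le.trans hμ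
  refine (mk_union_le _ _).trans ((add_le_add (hfin _ ?_) ?_).trans (add_eq_self hμ).le)
  · exact (associatedPrimes.finite T T).union (Set.finite_singleton _)
  · refine (mk_iUnion_le _).trans ?_
    refine (mul_le_mul' hM (ciSup_le' (a := μ) fun s => hfin _ ?_)).trans (mul_eq_self hμ).le
    exact (Set.finite_singleton _).union (associatedPrimes.finite T _)

theorem notMem_bad0 {R : Subring T} {M : Set (T × Ideal T)} (h : St d Q0 R M) {r : T} (hr : r ∈ R)
    (hr0 : r ≠ 0) : ∀ P ∈ bad0 Q0, r ∉ P := by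
  rintro P (hP | rfl) hrP
  · exact (nzd_iff r).1 (h.reg r hr hr0) P hP hrP
  · exact hr0 (h.gen r hr hrP)

theorem notMem_bad1 {R : Subring T} {M : Set (T × Ideal T)} (h : St d Q0 R M) {r : T} (hr : r ∈ R)
    {c : T × Ideal T} (hc : c ∈ M) (hcr : ¬ c.1 ∣ r) : ∀ P ∈ bad1 c, r ∉ P := by
  obtain ⟨h1, h2⟩ := h.regp c hc r hr hcr
  rintro P (rfl | hP)
  · exact h2
  · exact (Reg_iff _ _).1 h1 P hP

theorem gen0_of {R : Subring T} {M : Set (T × Ideal T)} (h : St d Q0 R M) {x : T}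
    (hx : ∀ P ∈ bad0 Q0, GenAt R x P) : Gen0 R x Q0 := by
  intro f hf
  obtain ⟨i, hi⟩ : ∃ i, f.coeff i ≠ 0 := by
    by_contra hcon; push Not at hcon; exact hf (Polynomial.ext hcon)
  have hi' : (f.coeff i : T) ≠ 0 := fun h0 => hi (Subtype.ext h0)
  have key : ∀ P ∈ bad0 Q0, Polynomial.aeval x f ∉ P := fun P hP hfP =>
    notMem_bad0 h (f.coeff i).2 hi' P hP (hx P hP f hfP i)
  exact ⟨(nzd_iff _).2 fun P hP => key P (Or.inl hP), key Q0 (Or.inr rfl)⟩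

theorem genP_of {R : Subring T} {M : Set (T × Ideal T)} (h : St d Q0 R M) {x : T}
    {c : T × Ideal T} (hc : c ∈ M) (hx : ∀ P ∈ bad1 c, GenAt R x P) : GenP R x c.1 c.2 := by
  intro f
  by_cases hf : ∀ i, c.1 ∣ (f.coeff i : T)
  · exact Or.inl hf
  push Not at hf
  obtain ⟨i, hi⟩ := hf
  have key : ∀ P ∈ bad1 c, Polynomial.aeval x f ∉ P := fun P hP hfP =>
    notMem_bad1 h (f.coeff i).2 hc hi P hP (hx P hP f hfP i)
  exact Or.inr ⟨(Reg_iff _ _).2 fun P hP => key P (Or.inr hP), key c.2 (Or.inl rfl)⟩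

theorem adjoin_generic (hs : Setup T d n Q0) (hμ : ℵ₀ ≤ μ) (hμ' : μ < #(ResidueField T))
    {X : Subring T × Set (T × Ideal T)} (hX : Good d Q0 μ X) (J : Ideal T) (t : T)
    (E : Set (Ideal T)) (hE : #E ≤ μ) (hEp : ∀ P ∈ E, P.IsPrime)
    (hJ : ∀ P ∈ bad Q0 X.2 ∪ E, ¬ J ≤ P) :
    ∃ Y, X ≤ Y ∧ Good d Q0 μ Y ∧ ∃ x ∈ Y.1, x ≠ 0 ∧ x - t ∈ J ∧ ∀ P ∈ E, x ∉ P := by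
  obtain ⟨R, M⟩ := X
  have h := hX.st
  obtain ⟨u, huJ, hu⟩ := avoid_generic R J ((fun P => (P, t, (1 : T))) '' (bad Q0 M ∪ E)) μ hμ hμ'
    hX.card1 (mk_image_le.trans ((mk_union_le _ _).trans
      ((add_le_add (bad_card hμ hX.card2) hE).trans (add_eq_self hμ).le))) (by
      rintro _ ⟨P, hP, rfl⟩
      have hPp : P.IsPrime := hP.elim (bad_prime hs h P) (hEp P)
      exact ⟨hPp, hJ P hP, fun h1 => hPp.ne_top ((Ideal.eq_top_iff_one _).2 h1)⟩)
  have hgen : ∀ P ∈ bad Q0 M ∪ E, GenAt R (t + u) P := by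
    intro P hP f hf
    refine hu _ ⟨P, hP, rfl⟩ f ?_
    simpa using hf
  have hg0 : Gen0 R (t + u) Q0 := gen0_of h fun P hP => hgen P (Or.inl (Or.inl hP))
  obtain ⟨h1, h2, M', h3, h4, h5⟩ := core_step d n hs.hd1 hs.hdn hs.hn μ hμ hμ' Q0 R M hX.card1
    hX.card2 h (Sat (adj R (t + u)))
    (fun c hc => ⟨_, rfl, genP_of h hc fun P hP =>
      hgen P (Or.inl (Or.inr (Set.mem_iUnion.2 ⟨⟨c, hc⟩, hP⟩)))⟩)
    ⟨_, rfl, hg0⟩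
  refine ⟨(Sat (adj R (t + u)), M'), ⟨h2, h3⟩, ⟨h1, h4, h5⟩, t + u, le_Sat _ (self_mem_adj _ _),
    ?_, by simpa using huJ, ?_⟩
  · have := (hg0 Polynomial.X Polynomial.X_ne_zero).1
    rw [Polynomial.aeval_X] at this
    exact nonZeroDivisors.ne_zero this
  · intro P hP hx
    have := hgen P (Or.inr hP) Polynomial.X (by simpa using hx) 1
    simp only [Polynomial.coeff_X_one] at this
    exact (hEp P hP).ne_top ((Ideal.eq_top_iff_one _).2 this)

theorem step_T1 (hs : Setup T d n Q0) (hμ : ℵ₀ ≤ μ) (hμ' : μ < #(ResidueField T))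
    {X : Subring T × Set (T × Ideal T)} (hX : Good d Q0 μ X) (t : T) :
    ∃ Y, X ≤ Y ∧ Good d Q0 μ Y ∧ ∃ x ∈ Y.1, x - t ∈ (maximalIdeal T) ^ 2 := by
  obtain ⟨Y, h1, h2, x, h3, -, h4, -⟩ := adjoin_generic hs hμ hμ' hX (maximalIdeal T ^ 2) t ∅
    (by simp) (by simp) (by
      intro P hP hle
      simp only [Set.union_empty] at hP
      have hp := bad_prime hs hX.st P hP
      have hm : maximalIdeal T ≤ P := hp.le_of_pow_le hle
      have h1 := (Ideal.height_mono hm).trans (bad_height hs hX.st P hP)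
      have h2 := IsLocalRing.maximalIdeal_height_eq_ringKrullDim (R := T)
      rw [hs.hn] at h2
      have h3 : (n : ℕ∞) ≤ d := by
        refine le_trans (le_of_eq ?_) h1
        exact (WithBot.coe_injective h2).symm
      have h4 : n ≤ d := by exact_mod_cast h3
      have := hs.hdn
      omega)
  exact ⟨Y, h1, h2, x, h3, h4⟩

theorem step_T2 (hs : Setup T d n Q0) (hμ : ℵ₀ ≤ μ) (hμ' : μ < #(ResidueField T))
    {X : Subring T × Set (T × Ideal T)} (hX : Good d Q0 μ X) (P : Ideal T) (hP : P.IsPrime)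
    (hPh : (d : ℕ∞) ≤ P.height) :
    ∃ Y, X ≤ Y ∧ Good d Q0 μ Y ∧ ∃ x ∈ Y.1, x ≠ 0 ∧ x ∈ P := by
  by_cases hcase : ∃ x ∈ X.1, x ≠ 0 ∧ x ∈ P
  · exact ⟨X, le_rfl, hX, hcase⟩
  obtain ⟨Y, h1, h2, x, h3, h4, h5, -⟩ := adjoin_generic hs hμ hμ' hX P 0 ∅
    (by simp) (by simp) (by
      intro Q hQ hle
      simp only [Set.union_empty] at hQ
      have hd1 := hs.hd1
      rcases hQ with hQ | hQ
      · have h1 : Q.height ≤ ((d - 1 : ℕ) : ℕ∞) := by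
          rcases hQ with hQ | rfl
          · exact hs.ass Q hQ
          · exact hs.q0h
        have h2 := (hPh.trans (Ideal.height_mono hle)).trans h1
        have h3 : d ≤ d - 1 := by exact_mod_cast h2
        omega
      · have h1 := bad_height hs hX.st Q (Or.inr hQ)
        obtain ⟨⟨c, hc⟩, hQ⟩ := Set.mem_iUnion.1 hQ
        have heq : P = Q := Ideal.eq_of_le_of_height_le P hle (h1.trans hPh)
        obtain ⟨k1, k2, -, k4⟩ := hX.st.mem c hc
        exact hcase ⟨c.1, k1, k2, heq ▸ self_mem_bad1 k4.mem hQ⟩)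
  exact ⟨Y, h1, h2, x, h3, h4, by simpa using h5⟩

theorem step_T3 (hs : Setup T d n Q0) (hμ : ℵ₀ ≤ μ) (hμ' : μ < #(ResidueField T))
    {X : Subring T × Set (T × Ideal T)} (hX : Good d Q0 μ X) (P : Ideal T)
    (hPh : ((d + 1 : ℕ) : ℕ∞) ≤ P.height) :
    ∃ Y, X ≤ Y ∧ Good d Q0 μ Y ∧ ∃ x ∈ Y.1, ∃ y ∈ Y.1, x ≠ 0 ∧ x ∈ P ∧ y ∈ P ∧ Reg x y := by
  have key : ∀ Q : Ideal T, Q.height ≤ (d : ℕ∞) → ¬ P ≤ Q := by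
    intro Q hQ hle
    have h1 := (hPh.trans (Ideal.height_mono hle)).trans hQ
    have h3 : d + 1 ≤ d := by exact_mod_cast h1
    omega
  obtain ⟨Y, h1, h2, x, h3, h4, h5, -⟩ := adjoin_generic hs hμ hμ' hX P 0 ∅
    (by simp) (by simp) (by
      intro Q hQ
      simp only [Set.union_empty] at hQ
      exact key Q (bad_height hs hX.st Q hQ))
  obtain ⟨Z, k1, k2, y, k3, -, k5, k6⟩ := adjoin_generic hs hμ hμ' h2 P 0
    (associatedPrimes T (T ⧸ Ideal.span {x}))
    ((lt_aleph0_iff_set_finite.2 (associatedPrimes.finite T _)).le.trans hμ)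
    (fun Q hQ => IsAssociatedPrime.isPrime hQ) (by
      rintro Q (hQ | hQ)
      · exact key Q (bad_height hs h2.st Q hQ)
      · exact key Q (hs.assz x (h2.st.reg x h3 h4) Q hQ))
  exact ⟨Z, h1.trans k1, k2, x, k1.1 h3, y, k3, h4, by simpa using h5, by simpa using k5,
    (Reg_iff _ _).2 k6⟩

end Steps

section TFour
variable {T : Type u} [CommRing T]

/-- `c` is an `R`-linear combination of the list. -/
def InSpan (R : Subring T) : List T → T → Prop
  | [], c => c = 0
  | y :: ys, c => ∃ a ∈ R, ∃ s, InSpan R ys s ∧ c = a * y + s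

theorem InSpan.mono {R S : Subring T} (h : R ≤ S) : ∀ {ys : List T} {c : T},
    InSpan R ys c → InSpan S ys c
  | [], _, hc => hc
  | _ :: _, _, ⟨a, ha, s, hs, hc⟩ => ⟨a, h ha, s, hs.mono h, hc⟩

theorem InSpan.zero (R : Subring T) : ∀ ys : List T, InSpan R ys 0
  | [] => rfl
  | _ :: ys => ⟨0, R.zero_mem, 0, InSpan.zero R ys, by simp⟩

theorem InSpan.scale {R : Subring T} (g : T) : ∀ {ys : List T} {c : T},
    InSpan R ys c → InSpan R (ys.map (g * ·)) (g * c)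
  | [], c, hc => by
      have : c = 0 := hc
      subst this; exact mul_zero _
  | _ :: _, _, ⟨a, ha, s, hs, hc⟩ => ⟨a, ha, g * s, hs.scale g, by subst hc; ring⟩

theorem InSpan.unscale {R : Subring T} (g : T) : ∀ {ys : List T} {c : T},
    InSpan R (ys.map (g * ·)) c → ∃ c', c = g * c' ∧ InSpan R ys c'
  | [], c, hc => ⟨0, by have : c = 0 := hc; simpa using this, rfl⟩
  | y :: ys, _, ⟨a, ha, s, hs, hc⟩ => by
      obtain ⟨s', rfl, hs'⟩ := InSpan.unscale (ys := ys) g hs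
      exact ⟨a * y + s', by subst hc; ring, a, ha, s', hs', rfl⟩

theorem inSpan_top : ∀ {ys : List T} {c : T},
    InSpan (⊤ : Subring T) ys c ↔ c ∈ Ideal.span {y | y ∈ ys}
  | [], c => by simp [InSpan]
  | y :: ys, c => by
      have : {z | z ∈ y :: ys} = insert y {z | z ∈ ys} := by ext; simp
      rw [this, Ideal.mem_span_insert]
      constructor
      · rintro ⟨a, -, s, hs, rfl⟩; exact ⟨a, s, inSpan_top.1 hs, rfl⟩
      · rintro ⟨a, s, hs, rfl⟩; exact ⟨a, trivial, s, inSpan_top.2 hs, rfl⟩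

theorem InSpan.mem_ideal {R : Subring T} {ys : List T} {c : T} (h : InSpan R ys c) :
    c ∈ Ideal.span {y | y ∈ ys} := inSpan_top.1 (h.mono le_top)

variable [IsLocalRing T] [IsNoetherianRing T] {d n : ℕ} {Q0 : Ideal T} {μ : Cardinal.{u}}

theorem content {R : Subring T} {M : Set (T × Ideal T)} (h : St d Q0 R M) :
    ∀ (I : Ideal T) (L : List T), (∀ y ∈ L, y ∈ R) → ∀ y ∈ L, y ≠ 0 → Ideal.span {y} = I →
    ∃ g ∈ R, g ≠ 0 ∧ ∃ L' : List T, (∀ y ∈ L', y ∈ R) ∧ L = L'.map (g * ·) ∧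
      ∀ c ∈ M, ∃ y ∈ L', ¬ c.1 ∣ y := by
  intro I
  induction I using WellFoundedGT.induction with
  | ind I ih =>
  rintro L hL y hy hy0 rfl
  by_cases hM : ∀ c ∈ M, ∃ y ∈ L, ¬ c.1 ∣ y
  · exact ⟨1, R.one_mem, one_ne_zero, L, hL, by simp, hM⟩
  push Not at hM
  obtain ⟨c, hc, hcL⟩ := hM
  obtain ⟨hcR, hc0, hcm, -⟩ := h.mem c hc
  have hex : ∃ L1 : List T, (∀ y ∈ L1, y ∈ R) ∧ L = L1.map (c.1 * ·) := by
    clear hy hy0 ih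
    induction L with
    | nil => exact ⟨[], by simp, rfl⟩
    | cons a L ih =>
      obtain ⟨L1, h1, h2⟩ := ih (fun y hy => hL y (List.mem_cons_of_mem _ hy))
        (fun y hy => hcL y (List.mem_cons_of_mem _ hy))
      obtain ⟨b, hb⟩ := hcL a List.mem_cons_self
      refine ⟨b :: L1, ?_, ?_⟩
      · intro z hz
        rcases List.mem_cons.1 hz with rfl | hz
        · exact h.sat _ hcR hc0 _ (hb ▸ hL a List.mem_cons_self)
        · exact h1 z hz
      · rw [List.map_cons, ← hb, ← h2]
  obtain ⟨L1, hL1, rfl⟩ := hex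
  obtain ⟨y1, hy1, rfl⟩ := List.mem_map.1 hy
  have hy10 : y1 ≠ 0 := by rintro rfl; simp at hy0
  obtain ⟨g, hg, hg0, L', hL', rfl, hML⟩ := ih _ (lt_span_of_mul hcm hy10) L1 hL1 y1 hy1 hy10 rfl
  refine ⟨c.1 * g, R.mul_mem hcR hg, ?_, L', hL', ?_, hML⟩
  · intro h0
    exact hg0 ((mul_left_mem_nonZeroDivisors_eq_zero_iff (h.reg _ hcR hc0)).1 h0)
  · rw [List.map_map]; apply List.map_congr_left; intro a _; simp [mul_assoc]

theorem step_T4 (hs : Setup T d n Q0) (hμ : ℵ₀ ≤ μ) (hμ' : μ < #(ResidueField T)) :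
    ∀ (k : ℕ) (ys : List T), ys.length = k → ∀ X : Subring T × Set (T × Ideal T),
    Good d Q0 μ X → (∀ y ∈ ys, y ∈ X.1) → ∀ c ∈ X.1, InSpan ⊤ ys c →
    ∃ Y, X ≤ Y ∧ Good d Q0 μ Y ∧ InSpan Y.1 ys c := by
  intro k
  induction k with
  | zero =>
    intro ys hk X hX _ c hc hin
    rw [List.length_eq_zero_iff] at hk
    subst hk
    exact ⟨X, le_rfl, hX, hin⟩
  | succ k ih =>
  rintro (_ | ⟨y0, ys⟩) hk X hX hys c hc hin
  · simp at hk
  have hk' : ys.length = k := by simpa using hk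
  obtain ⟨t0, -, s0, hs0, hcs⟩ := hin
  have hy0R : y0 ∈ X.1 := hys _ List.mem_cons_self
  have hysR : ∀ y ∈ ys, y ∈ X.1 := fun y hy => hys y (List.mem_cons_of_mem _ hy)
  by_cases hy0 : y0 = 0
  · subst hy0
    obtain ⟨Y, h1, h2, h3⟩ := ih ys hk' X hX hysR c hc (by
      have : c = s0 := by rw [hcs]; simp
      rwa [this])
    exact ⟨Y, h1, h2, 0, Y.1.zero_mem, c, h3, by simp⟩
  by_cases hall : ∀ y ∈ ys, y = 0
  · have hs00 : s0 = 0 := by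
      have : Ideal.span {y | y ∈ ys} ≤ ⊥ := by
        rw [Ideal.span_le]; intro y hy; simpa using hall y hy
      simpa using this (inSpan_top.1 hs0)
    subst hs00
    refine ⟨X, le_rfl, hX, t0, hX.st.sat y0 hy0R hy0 t0 ?_, 0, InSpan.zero _ _, hcs⟩
    rw [mul_comm]; rwa [hcs, add_zero] at hc
  push Not at hall
  obtain ⟨y1, hy1, hy10⟩ := hall
  obtain ⟨R, M⟩ := X
  have h := hX.st
  simp only at hc hy0R hysR h
  obtain ⟨g, hg, hg0, L, hL, rfl, hLM⟩ := content h _ ys hysR y1 hy1 hy10 rfl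
  obtain ⟨s1, rfl, hs1⟩ := InSpan.unscale g hs0
  obtain ⟨e, he, he0, L2, hL2, hL2e, hLM2⟩ := content h _ [y0, g]
    (by simp [hy0R, hg]) y0 (by simp) hy0 rfl
  obtain ⟨y0', L3, rfl, rfl, h3⟩ : ∃ y0' L3, L2 = y0' :: L3 ∧ y0 = e * y0' ∧
      [g] = L3.map (e * ·) := by
    cases L2 with
    | nil => simp at hL2e
    | cons a L => simp only [List.map_cons, List.cons.injEq] at hL2e; exact ⟨a, L, rfl, hL2e⟩
  obtain ⟨g', rfl, rfl⟩ : ∃ g', L3 = [g'] ∧ g = e * g' := by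
    cases L3 with
    | nil => simp at h3
    | cons a L =>
      simp only [List.map_cons, List.cons.injEq] at h3
      obtain ⟨h3, h4⟩ := h3
      have : L = [] := by simpa using h4.symm
      exact ⟨a, by rw [this], h3⟩
  have hy0' : y0' ∈ R := hL2 _ (by simp)
  have hg' : g' ∈ R := hL2 _ (by simp)
  have hy0'0 : y0' ≠ 0 := by rintro rfl; simp at hy0
  have hg'0 : g' ≠ 0 := by rintro rfl; simp at hg0
  have hc' : t0 * y0' + g' * s1 ∈ R := by
    refine h.sat e he he0 _ ?_
    rw [hcs] at hc
    convert hc using 1; ring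
  obtain ⟨y1', hy1', rfl⟩ := List.mem_map.1 hy1
  have hy1'0 : y1' ≠ 0 := by rintro rfl; simp at hy10
  set J := Ideal.span {y | y ∈ L} with hJ
  have hJb : ∀ P ∈ bad Q0 M, ¬ J ≤ P := by
    rintro P (hP | hP) hle
    · exact notMem_bad0 h (hL _ hy1') hy1'0 P hP (hle (Ideal.subset_span hy1'))
    · obtain ⟨⟨b, hb⟩, hP⟩ := Set.mem_iUnion.1 hP
      obtain ⟨z, hz, hbz⟩ := hLM b hb
      exact notMem_bad1 h (hL _ hz) hb hbz P hP (hle (Ideal.subset_span hz))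
  have hbp := bad_prime hs h
  obtain ⟨u, huJ, hu⟩ := avoid_generic R J
    ((fun P => (P, t0, g')) '' {P ∈ bad Q0 M | g' ∉ P} ∪
      (fun P => (P, s1, -y0')) '' {P ∈ bad Q0 M | y0' ∉ P}) μ hμ hμ' hX.card1
    ((mk_union_le _ _).trans ((add_le_add
      (mk_image_le.trans ((mk_le_mk_of_subset (Set.sep_subset _ _)).trans (bad_card hμ hX.card2)))
      (mk_image_le.trans ((mk_le_mk_of_subset (Set.sep_subset _ _)).trans
        (bad_card hμ hX.card2)))).trans (add_eq_self hμ).le)) (by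
      rintro _ (⟨P, ⟨hP, hgP⟩, rfl⟩ | ⟨P, ⟨hP, hgP⟩, rfl⟩)
      · exact ⟨hbp P hP, hJb P hP, hgP⟩
      · exact ⟨hbp P hP, hJb P hP, by simpa using hgP⟩)
  set x1 := t0 + g' * u with hx1
  set x2 := s1 - y0' * u with hx2
  have hgen1 : ∀ P ∈ bad Q0 M, g' ∉ P → GenAt R x1 P := by
    intro P hP hgP f hf
    exact hu _ (Or.inl ⟨P, ⟨hP, hgP⟩, rfl⟩) f hf
  have hgen2 : ∀ P ∈ bad Q0 M, y0' ∉ P → GenAt R x2 P := by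
    intro P hP hgP f hf
    refine hu _ (Or.inr ⟨P, ⟨hP, hgP⟩, rfl⟩) f ?_
    have : s1 + -y0' * u = x2 := by rw [hx2]; ring
    simpa only [this] using hf
  have hrel : t0 * y0' + g' * s1 = x1 * y0' + g' * x2 := by rw [hx1, hx2]; ring
  have hx2S : x2 ∈ Sat (adj R x1) := by
    refine ⟨g', le_adj _ _ hg', h.reg _ hg' hg'0, ?_⟩
    have : g' * x2 = (t0 * y0' + g' * s1) - x1 * y0' := by rw [hrel]; ring
    rw [this]
    exact sub_mem (le_adj _ _ hc') (mul_mem (self_mem_adj _ _) (le_adj _ _ hy0'))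
  have hx1S : x1 ∈ Sat (adj R x2) := by
    refine ⟨y0', le_adj _ _ hy0', h.reg _ hy0' hy0'0, ?_⟩
    have : y0' * x1 = (t0 * y0' + g' * s1) - g' * x2 := by rw [hrel]; ring
    rw [this]
    exact sub_mem (le_adj _ _ hc') (mul_mem (le_adj _ _ hg') (self_mem_adj _ _))
  have hSS : Sat (adj R x1) = Sat (adj R x2) := by
    apply le_antisymm
    · exact (Sat_mono (adj_le ((le_adj _ _).trans (le_Sat _)) hx1S)).trans (Sat_Sat_le _)
    · exact (Sat_mono (adj_le ((le_adj _ _).trans (le_Sat _)) hx2S)).trans (Sat_Sat_le _)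
  obtain ⟨h1, h2, M', h3, h4, h5⟩ := core_step d n hs.hd1 hs.hdn hs.hn μ hμ hμ' Q0 R M hX.card1
    hX.card2 h (Sat (adj R x1)) (by
      intro b hb
      have hbb : ∀ P ∈ bad1 b, P ∈ bad Q0 M := fun P hP =>
        Or.inr (Set.mem_iUnion.2 ⟨⟨b, hb⟩, hP⟩)
      by_cases hbg : b.1 ∣ g'
      · have hby : ¬ b.1 ∣ y0' := by
          obtain ⟨z, hz, hbz⟩ := hLM2 b hb
          simp only [List.mem_cons, List.not_mem_nil, or_false] at hz
          rcases hz with rfl | rfl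
          · exact hbz
          · exact absurd hbg hbz
        exact ⟨x2, hSS, genP_of h hb fun P hP =>
          hgen2 P (hbb P hP) (notMem_bad1 h hy0' hb hby P hP)⟩
      · exact ⟨x1, rfl, genP_of h hb fun P hP =>
          hgen1 P (hbb P hP) (notMem_bad1 h hg' hb hbg P hP)⟩)
    ⟨x1, rfl, gen0_of h fun P hP => hgen1 P (Or.inl hP) (notMem_bad0 h hg' hg'0 P hP)⟩
  have hx2in : InSpan ⊤ L x2 := by
    rw [inSpan_top] at hs1 ⊢
    exact sub_mem hs1 (Ideal.mul_mem_left _ _ huJ)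
  obtain ⟨Y, hY1, hY2, hY3⟩ := ih L (by simpa using hk') (Sat (adj R x1), M') ⟨h1, h4, h5⟩
    (fun y hy => h2 (hL y hy)) x2 hx2S hx2in
  refine ⟨Y, le_trans ⟨h2, h3⟩ hY1, hY2, x1, hY1.1 (le_Sat _ (self_mem_adj _ _)),
    e * g' * x2, hY3.scale _, ?_⟩
  rw [hcs]
  linear_combination e * hrel
end TFour

section Transfinite
variable {T : Type u} [CommRing T] [IsLocalRing T] {d n : ℕ} {Q0 : Ideal T}

/-- The tasks attached to a list. -/
structure LTask (d : ℕ) (ℓ : List T) (X Y : Subring T × Set (T × Ideal T)) : Prop where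
  t1 : ∀ t, ℓ = [t] → ∃ x ∈ Y.1, x - t ∈ (maximalIdeal T) ^ 2
  t2 : (Ideal.span {y | y ∈ ℓ}).IsPrime → (d : ℕ∞) ≤ (Ideal.span {y | y ∈ ℓ}).height →
    ∃ x ∈ Y.1, x ≠ 0 ∧ x ∈ Ideal.span {y | y ∈ ℓ}
  t3 : ((d + 1 : ℕ) : ℕ∞) ≤ (Ideal.span {y | y ∈ ℓ}).height →
    ∃ x ∈ Y.1, ∃ y ∈ Y.1, x ≠ 0 ∧ x ∈ Ideal.span {y | y ∈ ℓ} ∧ y ∈ Ideal.span {y | y ∈ ℓ} ∧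
      Reg x y
  t4 : ∀ c ys, ℓ = c :: ys → (∀ y ∈ ys, y ∈ X.1) → c ∈ X.1 → InSpan ⊤ ys c → InSpan Y.1 ys c

theorem step_all [IsNoetherianRing T] (hs : Setup T d n Q0) {μ : Cardinal.{u}}
    (hμ : ℵ₀ ≤ μ) (hμ' : μ < #(ResidueField T))
    {X : Subring T × Set (T × Ideal T)} (hX : Good d Q0 μ X) (ℓ : List T) :
    ∃ Y, X ≤ Y ∧ Good d Q0 μ Y ∧ LTask d ℓ X Y := by
  set P := Ideal.span {y | y ∈ ℓ} with hP
  obtain ⟨Y1, a1, b1, c1⟩ : ∃ Y, X ≤ Y ∧ Good d Q0 μ Y ∧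
      ∀ t, ℓ = [t] → ∃ x ∈ Y.1, x - t ∈ (maximalIdeal T) ^ 2 := by
    by_cases h : ∃ t, ℓ = [t]
    · obtain ⟨t, rfl⟩ := h
      obtain ⟨Y, h1, h2, h3⟩ := step_T1 hs hμ hμ' hX t
      refine ⟨Y, h1, h2, ?_⟩
      rintro t' ht'
      obtain rfl : t = t' := by simpa using ht'
      exact h3
    · exact ⟨X, le_rfl, hX, fun t ht => absurd ⟨t, ht⟩ h⟩
  obtain ⟨Y2, a2, b2, c2⟩ : ∃ Y, Y1 ≤ Y ∧ Good d Q0 μ Y ∧ (P.IsPrime → (d : ℕ∞) ≤ P.height →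
    ∃ x ∈ Y.1, x ≠ 0 ∧ x ∈ P) := by
    by_cases h : P.IsPrime ∧ (d : ℕ∞) ≤ P.height
    · obtain ⟨Y, h1, h2, h3⟩ := step_T2 hs hμ hμ' b1 P h.1 h.2
      exact ⟨Y, h1, h2, fun _ _ => h3⟩
    · exact ⟨Y1, le_rfl, b1, fun h1 h2 => absurd ⟨h1, h2⟩ h⟩
  obtain ⟨Y3, a3, b3, c3⟩ : ∃ Y, Y2 ≤ Y ∧ Good d Q0 μ Y ∧ (((d + 1 : ℕ) : ℕ∞) ≤ P.height →
    ∃ x ∈ Y.1, ∃ y ∈ Y.1, x ≠ 0 ∧ x ∈ P ∧ y ∈ P ∧ Reg x y) := by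
    by_cases h : ((d + 1 : ℕ) : ℕ∞) ≤ P.height
    · obtain ⟨Y, h1, h2, h3⟩ := step_T3 hs hμ hμ' b2 P h
      exact ⟨Y, h1, h2, fun _ => h3⟩
    · exact ⟨Y2, le_rfl, b2, fun h1 => absurd h1 h⟩
  have a : X ≤ Y3 := a1.trans (a2.trans a3)
  obtain ⟨Y4, a4, b4, c4⟩ : ∃ Y, Y3 ≤ Y ∧ Good d Q0 μ Y ∧
      ∀ c ys, ℓ = c :: ys → (∀ y ∈ ys, y ∈ X.1) → c ∈ X.1 → InSpan ⊤ ys c →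
        InSpan Y.1 ys c := by
    by_cases h : ∃ c ys, ℓ = c :: ys ∧ (∀ y ∈ ys, y ∈ X.1) ∧ c ∈ X.1 ∧ InSpan ⊤ ys c
    · obtain ⟨c, ys, rfl, k1, k2, k3⟩ := h
      obtain ⟨Y, h1, h2, h3⟩ := step_T4 hs hμ hμ' _ ys rfl Y3 b3 (fun y hy => a.1 (k1 y hy)) c
        (a.1 k2) k3
      refine ⟨Y, h1, h2, ?_⟩
      rintro c' ys' he - - -
      simp only [List.cons.injEq] at he
      obtain ⟨rfl, rfl⟩ := he
      exact h3
    · exact ⟨Y3, le_rfl, b3, fun c ys h1 h2 h3 h4 => absurd ⟨c, ys, h1, h2, h3, h4⟩ h⟩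
  refine ⟨Y4, a.trans a4, b4, ?_, ?_, ?_, c4⟩
  · intro t ht
    obtain ⟨x, hx, hx'⟩ := c1 t ht
    exact ⟨x, (a2.trans (a3.trans a4)).1 hx, hx'⟩
  · intro h1 h2
    obtain ⟨x, hx, hx'⟩ := c2 h1 h2
    exact ⟨x, (a3.trans a4).1 hx, hx'⟩
  · intro h1
    obtain ⟨x, hx, y, hy, hx'⟩ := c3 h1
    exact ⟨x, a4.1 hx, y, a4.1 hy, hx'⟩

theorem step_total [IsNoetherianRing T] (hs : Setup T d n Q0) (ℓ : List T)
    (Z : Subring T × Set (T × Ideal T)) :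
    ∃ Y, Z ≤ Y ∧ ∀ μ : Cardinal.{u}, ℵ₀ ≤ μ → μ < #(ResidueField T) → Good d Q0 μ Z →
      Good d Q0 μ Y ∧ LTask d ℓ Z Y := by
  by_cases h : ∃ μ : Cardinal.{u}, ℵ₀ ≤ μ ∧ μ < #(ResidueField T) ∧ Good d Q0 μ Z
  · obtain ⟨μ, h1, h2, h3⟩ := h
    have hle : ∀ ν : Cardinal.{u}, ℵ₀ ≤ ν → Good d Q0 ν Z → max ℵ₀ (max #Z.1 #Z.2) ≤ ν :=
      fun ν h1 h3 => max_le h1 (max_le h3.card1 h3.card2)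
    obtain ⟨Y, k1, k2, k3⟩ := step_all hs (μ := max ℵ₀ (max #Z.1 #Z.2)) (le_max_left _ _)
      ((hle μ h1 h3).trans_lt h2)
      ⟨(le_max_left _ _).trans (le_max_right _ _), (le_max_right _ _).trans (le_max_right _ _),
        h3.st⟩ ℓ
    exact ⟨Y, k1, fun ν l1 _ l3 => ⟨⟨k2.card1.trans (hle ν l1 l3), k2.card2.trans (hle ν l1 l3),
      k2.st⟩, k3⟩⟩
  · exact ⟨Z, le_rfl, fun μ h1 h2 h3 => absurd ⟨μ, h1, h2, h3⟩ h⟩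

theorem mem_iSup_fst {J : Type u} [Nonempty J] {F : J → Subring T × Set (T × Ideal T)}
    (hF : Directed (· ≤ ·) F) {x : T} : x ∈ (⨆ j, F j).1 ↔ ∃ j, x ∈ (F j).1 := by
  rw [Prod.fst_iSup]
  refine Subring.mem_iSup_of_directed ?_
  intro i j
  obtain ⟨k, h1, h2⟩ := hF i j
  exact ⟨k, h1.1, h2.1⟩

theorem mem_iSup_snd {J : Type u} {F : J → Subring T × Set (T × Ideal T)}
    {x : T × Ideal T} : x ∈ (⨆ j, F j).2 ↔ ∃ j, x ∈ (F j).2 := by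
  rw [Prod.snd_iSup]; simp

theorem St_iSup {J : Type u} [Nonempty J] {F : J → Subring T × Set (T × Ideal T)}
    (hF : Directed (· ≤ ·) F) (h : ∀ j, St d Q0 (F j).1 (F j).2) :
    St d Q0 (⨆ j, F j).1 (⨆ j, F j).2 where
  sat := by
    intro a ha ha0 s has
    rw [mem_iSup_fst hF] at *
    obtain ⟨i, hi⟩ := ha
    obtain ⟨j, hj⟩ := has
    obtain ⟨k, hik, hjk⟩ := hF i j
    exact ⟨k, (h k).sat a (hik.1 hi) ha0 s (hjk.1 hj)⟩
  reg := by
    intro a ha ha0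
    obtain ⟨i, hi⟩ := (mem_iSup_fst hF).1 ha
    exact (h i).reg a hi ha0
  gen := by
    intro a ha ha0
    obtain ⟨i, hi⟩ := (mem_iSup_fst hF).1 ha
    exact (h i).gen a hi ha0
  mem := by
    intro c hc
    obtain ⟨i, hi⟩ := mem_iSup_snd.1 hc
    exact ⟨(mem_iSup_fst hF).2 ⟨i, ((h i).mem c hi).1⟩, ((h i).mem c hi).2⟩
  regp := by
    intro c hc r hr hcr
    obtain ⟨i, hi⟩ := mem_iSup_snd.1 hc
    obtain ⟨j, hj⟩ := (mem_iSup_fst hF).1 hr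
    obtain ⟨k, hik, hjk⟩ := hF i j
    exact (h k).regp c (hik.2 hi) r (hjk.1 hj) hcr
  fac := by
    intro r hr hr0 hrm
    obtain ⟨i, hi⟩ := (mem_iSup_fst hF).1 hr
    obtain ⟨c, hc, hcr⟩ := (h i).fac r hi hr0 hrm
    exact ⟨c, mem_iSup_snd.2 ⟨i, hc⟩, hcr⟩

theorem Good_iSup {J : Type u} [Nonempty J] {F : J → Subring T × Set (T × Ideal T)}
    {μ : Cardinal.{u}} (hμ : ℵ₀ ≤ μ) (hJ : #J ≤ μ)
    (hF : Directed (· ≤ ·) F) (h : ∀ j, Good d Q0 μ (F j)) :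
    Good d Q0 μ (⨆ j, F j) where
  card1 := by
    have : ((⨆ j, F j).1 : Set T) = ⋃ j, ((F j).1 : Set T) := by
      ext x; simp only [Set.mem_iUnion, SetLike.mem_coe]; exact mem_iSup_fst hF
    have h2 : #(⨆ j, F j).1 = #(⋃ j, ((F j).1 : Set T)) := by rw [← this]; rfl
    rw [h2]
    refine (mk_iUnion_le _).trans ?_
    exact (mul_le_mul' hJ (ciSup_le' fun s => (h s).card1)).trans (mul_eq_self hμ).le
  card2 := by
    have : (⨆ j, F j).2 = ⋃ j, (F j).2 := by
      ext x; simp only [Set.mem_iUnion]; exact mem_iSup_snd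
    rw [this]
    refine (mk_iUnion_le _).trans ?_
    exact (mul_le_mul' hJ (ciSup_le' fun s => (h s).card2)).trans (mul_eq_self hμ).le
  st := St_iSup hF fun j => (h j).st

theorem exists_enum (κ : Cardinal.{u}) (hκ : ℵ₀ ≤ κ) (B : Type u) (hB : #B = κ) :
    ∃ e : κ.ord.ToType → B, ∀ b j, ∃ i, j < i ∧ e i = b := by
  have h1 : #(κ.ord.ToType) = #(B × κ.ord.ToType) := by
    rw [mk_prod, lift_id, lift_id, hB, mk_ord_toType, mul_eq_self hκ]
  obtain ⟨φ⟩ := Cardinal.eq.1 h1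
  refine ⟨fun i => (φ i).1, fun b j => ?_⟩
  by_contra hcon
  push Not at hcon
  have hsub : ∀ k, φ.symm (b, k) ≤ j := by
    intro k
    by_contra hk
    exact hcon _ (not_le.1 hk) (by simp)
  have hle : #(κ.ord.ToType) ≤ #(Set.Iic j) :=
    mk_le_of_injective (f := fun k => (⟨φ.symm (b, k), hsub k⟩ : Set.Iic j)) (by
      intro k k' h
      have := φ.symm.injective (Subtype.ext_iff.1 h)
      simpa using this)
  rw [mk_ord_toType] at hle
  have h2 : #(Set.Iic j) ≤ #(Set.Iio j) + 1 := by
    have : Set.Iic j = insert j (Set.Iio j) := by ext; simp [le_iff_eq_or_lt]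
    rw [this]; exact mk_insert_le
  have h3 : #(Set.Iio j) < κ := (by simpa using mk_Iio_lt j)
  exact absurd (hle.trans h2) (not_le.2 (add_lt_of_lt hκ h3 (one_lt_aleph0.trans_le hκ)))

theorem exists_final [IsNoetherianRing T] (hs : Setup T d n Q0)
    (hκ : ℵ₀ < #(ResidueField T)) (hcard : #T = #(ResidueField T))
    (hbase : ∃ (R : Subring T) (M : Set (T × Ideal T)), #R ≤ ℵ₀ ∧ #M ≤ ℵ₀ ∧ St d Q0 R M) :
    ∃ (R : Subring T) (M : Set (T × Ideal T)), St d Q0 R M ∧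
      (∀ t, ∃ x ∈ R, x - t ∈ (maximalIdeal T) ^ 2) ∧
      (∀ P : Ideal T, P.IsPrime → (d : ℕ∞) ≤ P.height → ∃ x ∈ R, x ≠ 0 ∧ x ∈ P) ∧
      (∀ P : Ideal T, ((d + 1 : ℕ) : ℕ∞) ≤ P.height →
        ∃ x ∈ R, ∃ y ∈ R, x ≠ 0 ∧ x ∈ P ∧ y ∈ P ∧ Reg x y) ∧
      (∀ ys : List T, (∀ y ∈ ys, y ∈ R) → ∀ c ∈ R, InSpan ⊤ ys c → InSpan R ys c) := by
  obtain ⟨R0, M0, hR0, hM0, hSt0⟩ := hbase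
  have hInf : Infinite T := by rw [infinite_iff, hcard]; exact hκ.le
  set κ := #(ResidueField T) with hκdef
  obtain ⟨e, he⟩ := exists_enum κ hκ.le (List T) (by rw [mk_list_eq_mk, hcard])
  choose G hG1 hG2 using step_total (T := T) hs
  let Fam (i : κ.ord.ToType) (f : ∀ j, j < i → Subring T × Set (T × Ideal T)) :
      Option (Set.Iio i) → Subring T × Set (T × Ideal T) :=
    fun o => o.elim (R0, M0) fun j => f j.1 j.2
  obtain ⟨X, hX⟩ : ∃ X : κ.ord.ToType → Subring T × Set (T × Ideal T),
      ∀ i, X i = G (e i) (⨆ o, Fam i (fun j _ => X j) o) := by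
    refine ⟨WellFoundedLT.fix (fun i f => G (e i) (⨆ o, Fam i f o)), fun i => ?_⟩
    rw [WellFoundedLT.fix_eq]
  have hsup : ∀ i, (⨆ o, Fam i (fun j _ => X j) o) ≤ X i := by
    intro i
    conv_rhs => rw [hX i]
    exact hG1 _ _
  have hbase : ∀ i, (R0, M0) ≤ X i := fun i =>
    (le_iSup (Fam i (fun j _ => X j)) none).trans (hsup i)
  have hlt : ∀ i j, j < i → X j ≤ ⨆ o, Fam i (fun j _ => X j) o := fun i j hj =>
    le_iSup (Fam i (fun j _ => X j)) (some ⟨j, hj⟩)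
  have hmono : Monotone X := monotone_iff_forall_lt.2 fun j i hj => (hlt i j hj).trans (hsup i)
  have hdir : ∀ i, Directed (· ≤ ·) (Fam i (fun j _ => X j)) := by
    rintro i (_ | ⟨j, hj⟩) (_ | ⟨k, hk⟩)
    · exact ⟨none, le_rfl, le_rfl⟩
    · exact ⟨some ⟨k, hk⟩, hbase k, le_rfl⟩
    · exact ⟨some ⟨j, hj⟩, le_rfl, hbase j⟩
    · rcases le_total j k with h | h
      · exact ⟨some ⟨k, hk⟩, hmono h, le_rfl⟩
      · exact ⟨some ⟨j, hj⟩, le_rfl, hmono h⟩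
  have hμ : ∀ i : κ.ord.ToType, max ℵ₀ #(Set.Iio i) < κ := fun i =>
    max_lt hκ ((by simpa using mk_Iio_lt i))
  have hgood : ∀ i, Good d Q0 (max ℵ₀ #(Set.Iio i)) (⨆ o, Fam i (fun j _ => X j) o) ∧
      Good d Q0 (max ℵ₀ #(Set.Iio i)) (X i) := by
    intro i
    induction i using WellFoundedLT.induction with
    | ind i ih =>
    have h1 : Good d Q0 (max ℵ₀ #(Set.Iio i)) (⨆ o, Fam i (fun j _ => X j) o) := by
      refine Good_iSup (le_max_left _ _) ?_ (hdir i) ?_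
      · rw [mk_option]
        exact (add_le_add (le_max_right _ _) (one_le_aleph0.trans (le_max_left _ _))).trans
          (add_eq_self (le_max_left _ _)).le
      · rintro (_ | ⟨j, hj⟩)
        · exact ⟨hR0.trans (le_max_left _ _), hM0.trans (le_max_left _ _), hSt0⟩
        · have h2 := (ih j hj).2
          have h3 : max ℵ₀ #(Set.Iio j) ≤ max ℵ₀ #(Set.Iio i) :=
            max_le_max le_rfl (mk_le_mk_of_subset (Set.Iio_subset_Iio (le_of_lt hj)))
          exact ⟨h2.card1.trans h3, h2.card2.trans h3, h2.st⟩
    refine ⟨h1, ?_⟩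
    rw [hX i]
    exact (hG2 (e i) _ _ (le_max_left _ _) (hμ i) h1).1
  have htask : ∀ i, LTask d (e i) (⨆ o, Fam i (fun j _ => X j) o) (X i) := by
    intro i
    have := (hG2 (e i) _ _ (le_max_left _ _) (hμ i) (hgood i).1).2
    rwa [← hX i] at this
  have hne : Nonempty κ.ord.ToType := by
    rw [← mk_ne_zero_iff, mk_ord_toType]
    exact (aleph0_pos.trans hκ).ne'
  have hXdir : Directed (· ≤ ·) X := hmono.directed_le
  have hle : ∀ i, X i ≤ ⨆ i, X i := le_iSup X
  have hfg : ∀ P : Ideal T, ∃ ℓ : List T, Ideal.span {y | y ∈ ℓ} = P := by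
    intro P
    obtain ⟨s, hs⟩ := (isNoetherianRing_iff_ideal_fg T).1 inferInstance P
    exact ⟨s.toList, by rw [← hs]; simp⟩
  have j0 := hne.some
  refine ⟨(⨆ i, X i).1, (⨆ i, X i).2, St_iSup hXdir fun i => (hgood i).2.st, ?_, ?_, ?_, ?_⟩
  · intro t
    obtain ⟨i, -, hi⟩ := he [t] j0
    obtain ⟨x, hx, hx'⟩ := (htask i).t1 t hi
    exact ⟨x, (hle i).1 hx, hx'⟩
  · intro P hP hPh
    obtain ⟨ℓ, rfl⟩ := hfg P
    obtain ⟨i, -, rfl⟩ := he ℓ j0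
    obtain ⟨x, hx, hx'⟩ := (htask i).t2 hP hPh
    exact ⟨x, (hle i).1 hx, hx'⟩
  · intro P hPh
    obtain ⟨ℓ, rfl⟩ := hfg P
    obtain ⟨i, -, rfl⟩ := he ℓ j0
    obtain ⟨x, hx, y, hy, hx'⟩ := (htask i).t3 hPh
    exact ⟨x, (hle i).1 hx, y, (hle i).1 hy, hx'⟩
  · intro ys hys c hc hin
    have key : ∀ ys : List T, (∀ y ∈ ys, y ∈ (⨆ i, X i).1) → ∃ j, ∀ y ∈ ys, y ∈ (X j).1 := by
      intro ys
      induction ys with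
      | nil => intro _; exact ⟨j0, by simp⟩
      | cons a ys ih =>
        intro h
        obtain ⟨j, hj⟩ := ih fun y hy => h y (List.mem_cons_of_mem _ hy)
        obtain ⟨k, hk⟩ := (mem_iSup_fst hXdir).1 (h a List.mem_cons_self)
        refine ⟨max j k, ?_⟩
        intro y hy
        rcases List.mem_cons.1 hy with rfl | hy
        · exact (hmono (le_max_right j k)).1 hk
        · exact (hmono (le_max_left j k)).1 (hj y hy)
    obtain ⟨j, hj⟩ := key (c :: ys) (by
      intro y hy
      rcases List.mem_cons.1 hy with rfl | hy
      · exact hc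
      · exact hys y hy)
    obtain ⟨i, hji, hi⟩ := he (c :: ys) j
    have h1 := (htask i).t4 c ys hi
      (fun y hy => (hlt i j hji).1 (hj y (List.mem_cons_of_mem _ hy)))
      ((hlt i j hji).1 (hj c List.mem_cons_self)) hin
    exact h1.mono (hle i).1
end Transfinite

theorem idealHt_prime {T : Type*} [CommRing T] (p : Ideal T) [hp : p.IsPrime] :
    idealHt p = p.height := by
  have h : p.height = Order.height (⟨p, hp⟩ : PrimeSpectrum T) :=
    PrimeSpectrum.height_eq_orderHeight ⟨p, hp⟩
  rw [h]
  apply le_antisymm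
  · exact iInf₂_le (⟨p, hp⟩ : PrimeSpectrum T) le_rfl
  · exact le_iInf₂ fun q hq => Order.height_mono (show (⟨p, hp⟩ : PrimeSpectrum T) ≤ q from hq)

theorem exists_series {T : Type u} [CommRing T] [IsLocalRing T] [IsAdicComplete (maximalIdeal T) T]
    {x : T} (hx : x ∈ maximalIdeal T) (ε : ℕ → T) :
    ∃ L : T, ∀ n, (∑ i ∈ Finset.range n, ε i * x ^ i) - L ∈ maximalIdeal T ^ n := by
  obtain ⟨L, hL⟩ := IsPrecomplete.prec' (I := maximalIdeal T) (M := T)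
    (fun n => ∑ i ∈ Finset.range n, ε i * x ^ i) (by
    intro m n hmn
    rw [SModEq.comm, SModEq.sub_mem, smul_eq_mul, Ideal.mul_top,
      ← Finset.sum_sdiff (Finset.range_mono hmn), add_sub_cancel_right]
    refine Ideal.sum_mem _ fun i hi => Ideal.mul_mem_left _ _ ?_
    simp only [Finset.mem_sdiff, Finset.mem_range, not_lt] at hi
    exact Ideal.pow_le_pow_right hi.2 (Ideal.pow_mem_pow hx i))
  refine ⟨L, fun n => ?_⟩
  have := hL n
  rwa [SModEq.sub_mem, smul_eq_mul, Ideal.mul_top] at this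

theorem aleph0_lt_mk {T : Type u} [CommRing T] [IsLocalRing T] [IsAdicComplete (maximalIdeal T) T]
    {x : T} (hx : x ∈ maximalIdeal T) (hxr : x ∈ nonZeroDivisors T) : ℵ₀ < #T := by
  choose L hL using exists_series (T := T) hx
  let b : (ℕ → Bool) → ℕ → T := fun ε i => if ε i then 1 else 0
  have hrec : ∀ ε : ℕ → T, L ε = ε 0 + x * L (fun i => ε (i + 1)) := by
    intro ε
    rw [← sub_eq_zero]
    refine IsHausdorff.haus' (I := maximalIdeal T) _ fun n => ?_
    rw [SModEq.zero, smul_eq_mul, Ideal.mul_top]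
    have h1 := Ideal.pow_le_pow_right (Nat.le_succ n) (hL ε (n + 1))
    have h2 := Ideal.mul_mem_left _ x (hL (fun i => ε (i + 1)) n)
    rw [Finset.sum_range_succ'] at h1
    have h3 := Ideal.sub_mem _ h2 h1
    convert h3 using 1
    have : ∑ k ∈ Finset.range n, ε (k + 1) * x ^ (k + 1) =
        x * ∑ i ∈ Finset.range n, ε (i + 1) * x ^ i := by
      rw [Finset.mul_sum]; exact Finset.sum_congr rfl fun i _ => by ring
    rw [this]; ring
  have hone : (1 : T) ∉ maximalIdeal T := fun h =>
    (maximalIdeal.isMaximal T).ne_top ((Ideal.eq_top_iff_one _).2 h)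
  have hstep : ∀ ε ε' : ℕ → Bool, L (b ε) = L (b ε') → ε 0 = ε' 0 ∧
      L (b fun i => ε (i + 1)) = L (b fun i => ε' (i + 1)) := by
    intro ε ε' h
    rw [hrec (b ε), hrec (b ε')] at h
    have h0 : ε 0 = ε' 0 := by
      have h1 : b ε 0 - b ε' 0 ∈ maximalIdeal T := by
        have : b ε 0 - b ε' 0 = x * (L (fun i => b ε' (i + 1)) - L (fun i => b ε (i + 1))) := by
          linear_combination h
        rw [this]; exact Ideal.mul_mem_right _ _ hx
      simp only [b] at h1
      cases h2 : ε 0 <;> cases h3 : ε' 0 <;> simp [h2, h3] at h1 ⊢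
    refine ⟨h0, ?_⟩
    have h4 : b ε 0 = b ε' 0 := by simp only [b, h0]
    rw [h4] at h
    exact (mul_cancel_left_mem_nonZeroDivisors hxr).1 (add_left_cancel h)
  have hinj : Function.Injective fun ε : ULift.{u} (ℕ → Bool) => L (b ε.down) := by
    rintro ⟨ε⟩ ⟨ε'⟩ h
    congr 1
    funext k
    simp only at h
    induction k generalizing ε ε' with
    | zero => exact (hstep ε ε' h).1
    | succ k ih => exact ih _ _ (hstep ε ε' h).2
  refine lt_of_lt_of_le ?_ (mk_le_of_injective hinj)
  rw [mk_uLift, mk_pi]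
  simpa using aleph0_lt_continuum

theorem exists_setup {T : Type u} [CommRing T] [IsLocalRing T]
    [IsNoetherianRing T] [IsAdicComplete (maximalIdeal T) T]
    (hequi : IsEquidim T)
    (hint : ∀ n : ℤ, n ≠ 0 → ((n : ℤ) : T) ∈ nonZeroDivisors T)
    (hκ : ℵ₀ < #(ResidueField T))
    (d : ℕ) (hd1 : 1 ≤ d) (hd2 : (d : WithBot ℕ∞) + 1 ≤ ringKrullDim T)
    (hAss : ∀ p ∈ associatedPrimes T T, idealHt p ≤ ((d - 1 : ℕ) : ℕ∞))
    (hreg : ∀ z ∈ nonZeroDivisors T, ∀ Q ∈ associatedPrimes T (T ⧸ Ideal.span {z}),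
      idealHt Q ≤ (d : ℕ∞)) :
    ∃ n, ∃ l : LTSeries (PrimeSpectrum T), l.length = d - 1 ∧ Setup T d n l.last.asIdeal ∧
      ∀ n : ℤ, n ≠ 0 → ((n : ℤ) : T) ∉ l.last.asIdeal := by
  obtain ⟨n, hn⟩ : ∃ n : ℕ, ringKrullDim T = n := by
    have h1 := ringKrullDim_ne_top (R := T)
    have h2 := ringKrullDim_ne_bot (R := T)
    obtain ⟨m, hm⟩ := WithBot.ne_bot_iff_exists.1 h2
    rw [← hm] at h1 ⊢
    have h3 : m ≠ ⊤ := by rintro rfl; exact h1 rfl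
    obtain ⟨k, rfl⟩ := ENat.ne_top_iff_exists.1 h3
    exact ⟨k, rfl⟩
  have hdn : d + 1 ≤ n := by rw [hn] at hd2; exact_mod_cast hd2
  obtain ⟨p, hp⟩ := Ideal.nonempty_minimalPrimes (I := (⊥ : Ideal T)) bot_ne_top
  have hpp : p.IsPrime := hp.1.1
  have hco : Order.coheight (⟨p, hpp⟩ : PrimeSpectrum T) = n := by
    have h1 := hequi p hp
    have h2 := dim_quot_eq_coheight (⟨p, hpp⟩ : PrimeSpectrum T)
    rw [hn] at h1
    exact WithBot.coe_injective (h2.symm.trans h1)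
  obtain ⟨l, hl, hlh, hlS, hlc⟩ := climb {s : T | ∃ n : ℤ, n ≠ 0 ∧ (n : T) = s} ℵ₀ le_rfl hκ (by
      refine le_aleph0_iff_set_countable.2 ?_
      exact (Set.countable_range (fun n : ℤ => (n : T))).mono
        (by rintro _ ⟨n, -, rfl⟩; exact ⟨n, rfl⟩))
    (n - d) (d - 1) ⟨p, hpp⟩ (by
      rintro _ ⟨k, hk, rfl⟩ hkp
      exact notMem_nonZeroDivisors_of_mem_mem_minimalPrimes hkp hp (hint k hk)) (by
      rw [hco]; exact_mod_cast (by omega : d - 1 + (n - d + 1) ≤ n))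
  refine ⟨n, l, hl, ⟨hd1, hdn, hn, l.last.2, ?_, ?_, ?_⟩, fun k hk => hlS _ ⟨k, hk, rfl⟩⟩
  · rw [PrimeSpectrum.height_eq_orderHeight]
    have h1 := height_add_coheight_le l.last
    rw [hn] at h1
    have h2 : Order.height l.last + Order.coheight l.last ≤ (n : ℕ∞) := WithBot.coe_le_coe.1 h1
    have h3 := (add_le_add_right hlc (Order.height l.last)).trans h2
    have h4 : Order.height l.last ≠ ⊤ := by
      rintro h; rw [h] at h3; simp at h3
    obtain ⟨a, ha⟩ := ENat.ne_top_iff_exists.1 h4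
    rw [← ha] at h3 ⊢
    have h5 : a + (n - d + 1) ≤ n := by exact_mod_cast h3
    exact_mod_cast (by omega : a ≤ d - 1)
  · intro q hq
    have := hq.isPrime
    rw [← idealHt_prime]; exact hAss q hq
  · intro z hz q hq
    have := IsAssociatedPrime.isPrime hq
    rw [← idealHt_prime]; exact hreg z hz q hq

section Ring
variable {T : Type u} [CommRing T] [IsLocalRing T] {d n : ℕ} {Q0 : Ideal T} {R : Subring T}
  {M : Set (T × Ideal T)}

theorem R_isDomain (h : St d Q0 R M) : IsDomain R := by
  have : NoZeroDivisors R := ⟨by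
    intro a b hab
    by_contra hcon
    push Not at hcon
    have ha : (a : T) ≠ 0 := fun h0 => hcon.1 (Subtype.ext h0)
    have h1 : (a : T) * b = 0 := congrArg Subtype.val hab
    exact hcon.2 (Subtype.ext
      ((mul_left_mem_nonZeroDivisors_eq_zero_iff (h.reg _ a.2 ha)).1 h1))⟩
  exact NoZeroDivisors.to_isDomain _

theorem R_isUnit (h : St d Q0 R M) (a : R) (ha : IsUnit (a : T)) : IsUnit a := by
  obtain ⟨b, hb⟩ := ha.exists_right_inv
  have hb' : b ∈ R := h.sat a a.2 ha.ne_zero b (by rw [hb]; exact R.one_mem)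
  exact IsUnit.of_mul_eq_one ⟨b, hb'⟩ (Subtype.ext hb)

theorem R_isLocalHom (h : St d Q0 R M) : IsLocalHom R.subtype := ⟨fun a ha => R_isUnit h a ha⟩

theorem R_isLocalRing (h : St d Q0 R M) : IsLocalRing R :=
  haveI := R_isLocalHom h
  RingHom.domain_isLocalRing R.subtype

theorem inSpan_ideal (I : Ideal R) : ∀ (ys : List T), (∀ y ∈ ys, ∃ i ∈ I, (i : T) = y) →
    ∀ c : T, InSpan R ys c → ∃ i ∈ I, (i : T) = c
  | [], _, c, hc => ⟨0, I.zero_mem, by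
      have : c = 0 := hc
      rw [this]; rfl⟩
  | y :: ys, hys, c, ⟨a, ha, s, hs, hc⟩ => by
      obtain ⟨i, hi, rfl⟩ := hys y List.mem_cons_self
      obtain ⟨j, hj, rfl⟩ := inSpan_ideal I ys (fun y hy => hys y (List.mem_cons_of_mem _ hy)) s hs
      exact ⟨⟨a, ha⟩ * i + j, I.add_mem (I.mul_mem_left _ hi) hj, by rw [hc]; rfl⟩

theorem R_comap_map
    (h4 : ∀ ys : List T, (∀ y ∈ ys, y ∈ R) → ∀ c ∈ R, InSpan ⊤ ys c → InSpan R ys c)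
    (I : Ideal R) (c : R) (hc : (c : T) ∈ I.map R.subtype) : c ∈ I := by
  obtain ⟨t, ht, hct⟩ := Submodule.mem_span_finite_of_mem_span hc
  have hys : ∀ y ∈ t.toList, ∃ i ∈ I, (i : T) = y := by
    intro y hy
    obtain ⟨i, hi, hiy⟩ := ht (Finset.mem_coe.2 (Finset.mem_toList.1 hy))
    exact ⟨i, hi, hiy⟩
  have h1 : InSpan ⊤ t.toList (c : T) := by
    rw [inSpan_top]
    convert hct using 2
    simp
  obtain ⟨i, hi, hic⟩ := inSpan_ideal I t.toList hys c (h4 _ (fun y hy => by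
    obtain ⟨i, -, rfl⟩ := hys y hy; exact i.2) c c.2 h1)
  rwa [← Subtype.ext hic]

theorem R_noeth [IsNoetherianRing T]
    (h4 : ∀ ys : List T, (∀ y ∈ ys, y ∈ R) → ∀ c ∈ R, InSpan ⊤ ys c → InSpan R ys c) :
    IsNoetherianRing R := by
  have hmono : StrictMono (fun I : Ideal R => I.map R.subtype) := by
    refine Monotone.strictMono_of_injective (fun I J h => Ideal.map_mono h) ?_
    intro I J h
    simp only at h
    apply le_antisymm
    · intro c hc
      exact R_comap_map h4 J c (h ▸ Ideal.mem_map_of_mem R.subtype hc)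
    · intro c hc
      exact R_comap_map h4 I c (h ▸ Ideal.mem_map_of_mem R.subtype hc)
  have : WellFoundedGT (Ideal R) := hmono.wellFoundedGT
  exact isNoetherian_iff.2 this.wf

theorem R_mem_max (h : St d Q0 R M) [IsLocalRing R] (a : R) :
    a ∈ maximalIdeal R ↔ (a : T) ∈ maximalIdeal T := by
  rw [mem_maximalIdeal, mem_maximalIdeal, mem_nonunits_iff, mem_nonunits_iff, not_iff_not]
  exact ⟨fun ha => ha.map R.subtype, R_isUnit h a⟩

theorem R_map_max [IsNoetherianRing T] (h : St d Q0 R M) [IsLocalRing R]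
    (h1 : ∀ t, ∃ x ∈ R, x - t ∈ (maximalIdeal T) ^ 2) :
    (maximalIdeal R).map R.subtype = maximalIdeal T := by
  apply le_antisymm
  · rw [Ideal.map_le_iff_le_comap]
    intro a ha
    exact (R_mem_max h a).1 ha
  · refine Submodule.le_of_le_smul_of_le_jacobson_bot (I := maximalIdeal T)
      (IsNoetherian.noetherian _) (IsLocalRing.maximalIdeal_le_jacobson _) ?_
    intro t ht
    obtain ⟨x, hx, hxt⟩ := h1 t
    have hxm : x ∈ maximalIdeal T := by
      have := Ideal.add_mem _ (Ideal.pow_le_self two_ne_zero hxt) ht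
      simpa using this
    have : t = x + -(x - t) := by ring
    rw [this]
    refine Submodule.add_mem_sup ?_ ?_
    · exact Ideal.mem_map_of_mem R.subtype ((R_mem_max h ⟨x, hx⟩).2 hxm)
    · rw [smul_eq_mul, ← pow_two]; exact neg_mem hxt

theorem R_map_pow [IsNoetherianRing T] (h : St d Q0 R M) [IsLocalRing R]
    (h1 : ∀ t, ∃ x ∈ R, x - t ∈ (maximalIdeal T) ^ 2) (k : ℕ) :
    (maximalIdeal R ^ k).map R.subtype = maximalIdeal T ^ k := by
  rw [Ideal.map_pow, R_map_max h h1]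

theorem R_dense [IsNoetherianRing T] (h : St d Q0 R M) [IsLocalRing R]
    (h1 : ∀ t, ∃ x ∈ R, x - t ∈ (maximalIdeal T) ^ 2) (k : ℕ) :
    ∀ t, ∃ x ∈ R, x - t ∈ maximalIdeal T ^ k := by
  induction k with
  | zero => intro t; exact ⟨0, R.zero_mem, by simp⟩
  | succ k ih =>
    have key : ∀ z ∈ maximalIdeal T ^ k, ∃ x ∈ R, x - z ∈ maximalIdeal T ^ (k + 1) := by
      intro z hz
      rw [← R_map_pow h h1 k] at hz
      refine Submodule.span_induction (p := fun z _ => ∃ x ∈ R, x - z ∈ maximalIdeal T ^ (k + 1))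
        ?_ ?_ ?_ ?_ hz
      · rintro _ ⟨a, -, rfl⟩
        exact ⟨a, a.2, by simp⟩
      · exact ⟨0, R.zero_mem, by simp⟩
      · rintro a b - - ⟨x, hx, hxa⟩ ⟨y, hy, hyb⟩
        refine ⟨x + y, R.add_mem hx hy, ?_⟩
        have := Ideal.add_mem _ hxa hyb
        convert this using 1; ring
      · rintro t a ha ⟨x, hx, hxa⟩
        obtain ⟨r, hr, hrt⟩ := h1 t
        have ha' : a ∈ maximalIdeal T ^ k := by rw [← R_map_pow h h1 k]; exact ha
        refine ⟨r * x, R.mul_mem hr hx, ?_⟩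
        have e : r * x - t • a = r * (x - a) + a * (r - t) := by rw [smul_eq_mul]; ring
        rw [e]
        refine Ideal.add_mem _ (Ideal.mul_mem_left _ _ hxa) ?_
        rw [pow_succ]
        exact Ideal.mul_mem_mul ha' (Ideal.pow_le_self two_ne_zero hrt)
    intro t
    obtain ⟨x, hx, hxt⟩ := ih t
    obtain ⟨y, hy, hyx⟩ := key _ hxt
    refine ⟨x - y, R.sub_mem hx hy, ?_⟩
    have := neg_mem hyx
    convert this using 1; ring

theorem R_completion [IsNoetherianRing T] [IsAdicComplete (maximalIdeal T) T]
    (h : St d Q0 R M) [IsLocalRing R]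
    (h1 : ∀ t, ∃ x ∈ R, x - t ∈ (maximalIdeal T) ^ 2)
    (h4 : ∀ ys : List T, (∀ y ∈ ys, y ∈ R) → ∀ c ∈ R, InSpan ⊤ ys c → InSpan R ys c) :
    ∃ e : AdicCompletion (maximalIdeal R) R ≃+* T,
      ∀ a : R, e (algebraMap R (AdicCompletion (maximalIdeal R) R) a) = R.subtype a := by
  have hle : ∀ k, maximalIdeal R ^ k ≤ (maximalIdeal T ^ k).comap R.subtype := by
    intro k
    rw [← Ideal.map_le_iff_le_comap, R_map_pow h h1]
  let q : ∀ k, R ⧸ maximalIdeal R ^ k →+* T ⧸ maximalIdeal T ^ k := fun k =>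
    Ideal.quotientMap _ R.subtype (hle k)
  have hqi : ∀ k, Function.Injective (q k) := by
    intro k
    apply Ideal.quotientMap_injective'
    intro a ha
    apply R_comap_map h4
    rw [R_map_pow h h1]
    exact ha
  have hqs : ∀ k, Function.Surjective (q k) := by
    intro k y
    obtain ⟨t, rfl⟩ := Ideal.Quotient.mk_surjective y
    obtain ⟨x, hx, hxt⟩ := R_dense h h1 k t
    refine ⟨Ideal.Quotient.mk _ ⟨x, hx⟩, ?_⟩
    simp only [q, Ideal.quotientMap_mk]
    exact Ideal.Quotient.eq.2 hxt
  let f : ∀ k, AdicCompletion (maximalIdeal R) R →+* T ⧸ maximalIdeal T ^ k := fun k =>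
    (q k).comp (AdicCompletion.evalₐ (maximalIdeal R) k).toRingHom
  have hf : ∀ {m n : ℕ} (hmn : m ≤ n), (Ideal.Quotient.factorPow (maximalIdeal T) hmn).comp (f n)
      = f m := by
    intro m n hmn
    ext x
    obtain ⟨x, rfl⟩ := AdicCompletion.mk_surjective _ _ x
    change Ideal.Quotient.factorPow (maximalIdeal T) hmn
      (q n (AdicCompletion.evalₐ (maximalIdeal R) n (AdicCompletion.mk _ _ x))) =
      q m (AdicCompletion.evalₐ (maximalIdeal R) m (AdicCompletion.mk _ _ x))
    rw [AdicCompletion.evalₐ_mk, AdicCompletion.evalₐ_mk, ← AdicCompletion.Ideal.mk_eq_mk _ hmn]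
    rfl
  let F := IsAdicComplete.liftRingHom (maximalIdeal T) f hf
  have hF : ∀ k x, Ideal.Quotient.mk (maximalIdeal T ^ k) (F x) = f k x := fun k x =>
    IsAdicComplete.mk_liftRingHom (maximalIdeal T) f hf k x
  have hT : ∀ a b : T, (∀ k, Ideal.Quotient.mk (maximalIdeal T ^ k) a = Ideal.Quotient.mk _ b) →
      a = b := by
    intro a b hab
    rw [← sub_eq_zero]
    refine IsHausdorff.haus' (I := maximalIdeal T) _ fun n => ?_
    rw [SModEq.zero, smul_eq_mul, Ideal.mul_top]
    exact Ideal.Quotient.eq.1 (hab n)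
  have hFi : Function.Injective F := by
    rw [injective_iff_map_eq_zero]
    intro x hx
    apply AdicCompletion.ext_evalₐ
    intro k
    apply hqi k
    have := hF k x
    rw [hx, map_zero] at this
    rw [map_zero, map_zero]
    exact this.symm
  have hFs : Function.Surjective F := by
    intro t
    choose x hx hxt using fun k => R_dense h h1 k t
    let s : AdicCompletion.AdicCauchySequence (maximalIdeal R) R :=
      AdicCompletion.AdicCauchySequence.mk _ _ (fun k => ⟨x k, hx k⟩) (by
        intro k
        rw [SModEq.sub_mem, smul_eq_mul, Ideal.mul_top]
        apply R_comap_map h4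
        rw [R_map_pow h h1]
        have := Ideal.sub_mem _ (hxt k) (Ideal.pow_le_pow_right (Nat.le_succ k) (hxt (k + 1)))
        convert this using 1
        push_cast; ring)
    refine ⟨AdicCompletion.mk _ _ s, hT _ _ fun k => ?_⟩
    rw [hF]
    change q k (AdicCompletion.evalₐ (maximalIdeal R) k (AdicCompletion.mk _ _ s)) = _
    rw [AdicCompletion.evalₐ_mk]
    simp only [q, Ideal.quotientMap_mk]
    exact Ideal.Quotient.eq.2 (hxt k)
  refine ⟨RingEquiv.ofBijective F ⟨hFi, hFs⟩, fun a => hT _ _ fun k => ?_⟩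
  change Ideal.Quotient.mk _ (F _) = _
  rw [hF]
  change q k (AdicCompletion.evalₐ (maximalIdeal R) k (algebraMap R _ a)) = _
  rw [AlgHom.commutes]
  rfl

theorem R_prime (h : St d Q0 R M) {c : T × Ideal T} (hc : c ∈ M) :
    Prime (⟨c.1, (h.mem c hc).1⟩ : R) := by
  obtain ⟨h1, h2, h3, h4⟩ := h.mem c hc
  have hdvd : ∀ r : R, c.1 ∣ (r : T) → (⟨c.1, h1⟩ : R) ∣ r := by
    rintro r ⟨s, hs⟩
    exact ⟨⟨s, h.sat _ h1 h2 s (hs ▸ r.2)⟩, Subtype.ext hs⟩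
  refine ⟨fun h0 => h2 (congrArg Subtype.val h0), ?_, ?_⟩
  · intro hu
    exact (mem_maximalIdeal _).1 h3 (hu.map R.subtype)
  · intro a b hab
    by_cases ha : c.1 ∣ (a : T)
    · exact Or.inl (hdvd a ha)
    · right
      apply hdvd
      refine (h.regp c hc a a.2 ha).1 b ?_
      obtain ⟨e, he⟩ := hab
      exact ⟨e, congrArg Subtype.val he⟩

theorem R_ufd [IsNoetherianRing T] (h : St d Q0 R M) [IsDomain R] :
    UniqueFactorizationMonoid R := by
  refine UniqueFactorizationMonoid.of_exists_prime_factors ?_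
  have key := h.induct (motive := fun r => ∃ (hr : r ∈ R) (f : Multiset R),
    (∀ b ∈ f, Prime b) ∧ Associated f.prod ⟨r, hr⟩) (by
      intro r hr hu
      refine ⟨hr, 0, by simp, ?_⟩
      rw [Multiset.prod_zero]
      exact (associated_one_iff_isUnit.2 (R_isUnit h ⟨r, hr⟩ hu)).symm) (by
      rintro c hc r hr hr0 ⟨_, f, hf, hfr⟩
      refine ⟨R.mul_mem (h.mem c hc).1 hr, ⟨c.1, (h.mem c hc).1⟩ ::ₘ f, ?_, ?_⟩
      · intro b hb
        rcases Multiset.mem_cons.1 hb with rfl | hb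
        · exact R_prime h hc
        · exact hf b hb
      · rw [Multiset.prod_cons]
        exact Associated.mul_left (⟨c.1, (h.mem c hc).1⟩ : R) hfr)
  intro a ha
  obtain ⟨hr, f, h1, h2⟩ := key a a.2 (fun h0 => ha (Subtype.ext h0))
  exact ⟨f, h1, h2⟩

end Ring

theorem alphaAt_eq_krullDim {T : Type u} [CommRing T] (X : LocalUFDWithCompletion T)
    (p : Ideal X.A) (hp : p.IsPrime) :
    alphaAt X p hp = Order.krullDim
      {P : PrimeSpectrum T // PrimeSpectrum.comap X.toCompletion P = ⟨p, hp⟩} := by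
  letI := X.toCompletion.toAlgebra
  haveI := hp
  have h1 := Order.krullDim_eq_of_orderIso (PrimeSpectrum.preimageOrderIsoFiber X.A T ⟨p, hp⟩)
  refine Eq.trans ?_ h1.symm
  exact ringKrullDim_eq_of_ringEquiv
    (Algebra.TensorProduct.comm X.A T p.ResidueField).toRingEquiv

theorem alphaAt_eq {T : Type u} [CommRing T] (X : LocalUFDWithCompletion T)
    (p : Ideal X.A) (hp : p.IsPrime) (k : ℕ) (l : LTSeries (PrimeSpectrum T))
    (hl : l.length = k) (hmem : ∀ i, (l i).asIdeal.comap X.toCompletion = p)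
    (hup : ∀ m : LTSeries (PrimeSpectrum T),
      (∀ i, (m i).asIdeal.comap X.toCompletion = p) → m.length ≤ k) :
    alphaAt X p hp = (k : WithBot ℕ∞) := by
  rw [alphaAt_eq_krullDim]
  apply le_antisymm
  · refine iSup_le fun m => ?_
    have := hup (m.map Subtype.val (fun _ _ h => h)) (fun i =>
      congrArg PrimeSpectrum.asIdeal (m i).2)
    exact_mod_cast this
  · let l' : LTSeries {P : PrimeSpectrum T // PrimeSpectrum.comap X.toCompletion P = ⟨p, hp⟩} :=
      { length := l.length
        toFun := fun i => ⟨l i, PrimeSpectrum.ext (hmem i)⟩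
        step := fun i => l.step i }
    have := Order.LTSeries.length_le_krullDim l'
    rw [← hl]
    exact this

section
variable {T : Type u} [CommRing T] [IsLocalRing T] [IsNoetherianRing T]
  {d : ℕ} {Q0 : Ideal T} {R : Subring T} {M : Set (T × Ideal T)}

theorem fiber_zero_up (hd1 : 1 ≤ d)
    (h2 : ∀ P : Ideal T, P.IsPrime → (d : ℕ∞) ≤ P.height → ∃ x ∈ R, x ≠ 0 ∧ x ∈ P)
    (m : LTSeries (PrimeSpectrum T)) (hm : ∀ i, (m i).asIdeal.comap R.subtype = ⊥) :
    m.length ≤ d - 1 := by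
  by_contra hlt
  have hh := Order.length_le_height_last (p := m)
  rw [← PrimeSpectrum.height_eq_orderHeight] at hh
  obtain ⟨x, hx, hx0, hxP⟩ := h2 m.last.asIdeal m.last.isPrime
    (le_trans (by exact_mod_cast (by omega : d ≤ m.length)) hh)
  have : (⟨x, hx⟩ : R) ∈ (⊥ : Ideal R) := by
    rw [← hm (Fin.last _)]; exact hxP
  exact hx0 (congrArg Subtype.val (Ideal.mem_bot.1 this))

theorem mark_mem (h : St d Q0 R M) (p : Ideal R) [p.IsPrime] (hp : p ≠ ⊥) :
    ∃ c, ∃ hc : c ∈ M, (⟨c.1, (h.mem c hc).1⟩ : R) ∈ p := by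
  obtain ⟨r, hr, hr0⟩ := Submodule.exists_mem_ne_zero_of_ne_bot hp
  have key := h.induct (motive := fun r => ∀ hr : r ∈ R, (⟨r, hr⟩ : R) ∈ p →
      ∃ c, ∃ hc : c ∈ M, (⟨c.1, (h.mem c hc).1⟩ : R) ∈ p) (by
    intro r hr hu _ hm
    exact absurd (Ideal.eq_top_of_isUnit_mem _ hm (R_isUnit h ⟨r, hr⟩ hu)) (Ideal.IsPrime.ne_top')) (by
    intro c hc r hr hr0 ih hcr hm
    have : (⟨c.1, (h.mem c hc).1⟩ * ⟨r, hr⟩ : R) ∈ p := hm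
    rcases Ideal.IsPrime.mem_or_mem ‹_› this with h' | h'
    · exact ⟨c, hc, h'⟩
    · exact ih hr h')
  exact key r r.2 (fun h0 => hr0 (Subtype.ext h0)) r.2 hr

theorem height_one_eq (h : St d Q0 R M) [IsDomain R] [IsNoetherianRing R] (p : Ideal R) [hp : p.IsPrime]
    (h1 : p.height = 1) :
    ∃ c, ∃ hc : c ∈ M, p = Ideal.span {(⟨c.1, (h.mem c hc).1⟩ : R)} := by
  have hb : p ≠ ⊥ := by
    rintro rfl
    simp at h1
  obtain ⟨c, hc, hcp⟩ := mark_mem h p hb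
  refine ⟨c, hc, ?_⟩
  have hpr := R_prime h hc
  haveI : (Ideal.span {(⟨c.1, (h.mem c hc).1⟩ : R)}).IsPrime :=
    (Ideal.span_singleton_prime hpr.ne_zero).2 hpr
  have hle : Ideal.span {(⟨c.1, (h.mem c hc).1⟩ : R)} ≤ p := by
    rw [Ideal.span_le]; simpa using hcp
  by_contra hne
  have hlt := lt_of_le_of_ne hle (Ne.symm hne)
  have hb' : (⊥ : Ideal R) < Ideal.span {(⟨c.1, (h.mem c hc).1⟩ : R)} :=
    bot_lt_iff_ne_bot.2 (by simpa [Ideal.span_singleton_eq_bot] using hpr.ne_zero)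
  have h2 := Ideal.height_add_one_le_of_lt_of_isPrime hlt
  have h3 := Ideal.height_add_one_le_of_lt_of_isPrime hb'
  rw [h1] at h2
  have h4 : (1 : ℕ∞) + 1 ≤ 1 := le_trans (by gcongr; exact le_trans le_add_self h3) h2
  norm_num at h4

theorem fiber_one_mem (h : St d Q0 R M) {c : T × Ideal T} (hc : c ∈ M) (P : Ideal T)
    (h1 : c.1 ∈ P) (h2 : P ≤ c.2) :
    P.comap R.subtype = Ideal.span {(⟨c.1, (h.mem c hc).1⟩ : R)} := by
  ext r
  rw [Ideal.mem_span_singleton]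
  constructor
  · intro hr
    have hr' : (r : T) ∈ c.2 := h2 hr
    by_contra hnd
    refine (h.regp c hc r r.2 ?_).2 hr'
    rintro ⟨s, hs⟩
    exact hnd ⟨⟨s, h.sat _ (h.mem c hc).1 (h.mem c hc).2.1 s (hs ▸ r.2)⟩, Subtype.ext hs⟩
  · rintro ⟨s, rfl⟩
    exact P.mul_mem_right _ h1

theorem fiber_one_up (h : St d Q0 R M) (hd1 : 1 ≤ d) {c : T × Ideal T} (hc : c ∈ M)
    (h3 : ∀ P : Ideal T, P.IsPrime → ((d + 1 : ℕ) : ℕ∞) ≤ P.height →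
      ∃ x ∈ R, ∃ y ∈ R, x ≠ 0 ∧ x ∈ P ∧ y ∈ P ∧ Reg x y)
    (m : LTSeries (PrimeSpectrum T))
    (hm : ∀ i, (m i).asIdeal.comap R.subtype = Ideal.span {(⟨c.1, (h.mem c hc).1⟩ : R)}) :
    m.length ≤ d - 1 := by
  by_contra hlt
  obtain ⟨hcR, hc0, hcm, -⟩ := h.mem c hc
  have hhead : c.1 ∈ m.head.asIdeal := by
    have : (⟨c.1, hcR⟩ : R) ∈ m.head.asIdeal.comap R.subtype := by
      have h0 := hm 0
      change m.head.asIdeal.comap R.subtype = _ at h0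
      rw [h0]; exact Ideal.mem_span_singleton_self _
    exact this
  obtain ⟨q, hq, hqle⟩ := Ideal.exists_minimalPrimes_le (I := (⊥ : Ideal T)) (J := m.head.asIdeal) bot_le
  have hqP : q.IsPrime := hq.1.1
  have hqne : (⟨q, hqP⟩ : PrimeSpectrum T) < m.head := by
    refine lt_of_le_of_ne hqle ?_
    intro he
    have : c.1 ∈ q := by
      have := congrArg PrimeSpectrum.asIdeal he
      change q = _ at this
      rw [this]; exact hhead
    exact notMem_nonZeroDivisors_of_mem_mem_minimalPrimes this hq (h.reg _ hcR hc0)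
  have hh := Order.length_le_height_last (p := m.cons ⟨q, hqP⟩ hqne)
  rw [← PrimeSpectrum.height_eq_orderHeight] at hh
  simp only [RelSeries.last_cons, RelSeries.cons_length] at hh
  obtain ⟨x, hx, y, hy, hx0, hxP, hyP, hxy⟩ := h3 m.last.asIdeal m.last.isPrime
    (le_trans (by exact_mod_cast (by omega : d + 1 ≤ m.length + 1)) hh)
  have hdv : ∀ z ∈ R, z ∈ m.last.asIdeal → ∃ s, z = c.1 * s := by
    intro z hz hzP
    have : (⟨z, hz⟩ : R) ∈ Ideal.span {(⟨c.1, (h.mem c hc).1⟩ : R)} := by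
      rw [← hm (Fin.last _)]; exact hzP
    obtain ⟨s, hs⟩ := Ideal.mem_span_singleton.1 this
    exact ⟨s, congrArg Subtype.val hs⟩
  obtain ⟨x', hx'⟩ := hdv x hx hxP
  obtain ⟨y', hy'⟩ := hdv y hy hyP
  obtain ⟨t, ht⟩ := hxy x' ⟨y', by rw [hx', hy']; ring⟩
  have hu : IsUnit (1 - c.1 * t) := by
    by_contra hnu
    have h1 : (1 - c.1 * t) ∈ maximalIdeal T := hnu
    have : (1 : T) ∈ maximalIdeal T := by
      have := Ideal.add_mem _ h1 (Ideal.mul_mem_right t _ hcm)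
      simpa using this
    exact (Ideal.ne_top_iff_one _).1 (maximalIdeal.isMaximal T).ne_top this
  have : (1 - c.1 * t) * x' = 0 := by
    rw [hx'] at ht
    linear_combination ht
  rw [hu.mul_right_eq_zero] at this
  exact hx0 (by rw [hx', this, mul_zero])
end

theorem exists_local_UFD_formal_fibers_eq {T : Type u} [CommRing T] [IsLocalRing T]
    [IsNoetherianRing T] [IsAdicComplete (maximalIdeal T) T]
    (hequi : IsEquidim T) (hdim : 2 ≤ ringKrullDim T) (hdepth : DepthGTOne T)
    (hint : ∀ n : ℤ, n ≠ 0 → ((n : ℤ) : T) ∈ nonZeroDivisors T)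
    (hcard : #T = #(ResidueField T))
    (d : ℕ) (hd1 : 1 ≤ d) (hd2 : (d : WithBot ℕ∞) + 1 ≤ ringKrullDim T)
    (hAss : ∀ p ∈ associatedPrimes T T, idealHt p ≤ ((d - 1 : ℕ) : ℕ∞))
    (hreg : ∀ z ∈ nonZeroDivisors T, ∀ Q ∈ associatedPrimes T (T ⧸ Ideal.span {z}),
      idealHt Q ≤ (d : ℕ∞)) :
    ∃ X : LocalUFDWithCompletion T,
      alphaAt X ⊥ Ideal.bot_prime = ((d - 1 : ℕ) : WithBot ℕ∞) ∧
      ∀ (p : Ideal X.A) (hp : p.IsPrime), idealHt p = 1 →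
        alphaAt X p hp = ((d - 1 : ℕ) : WithBot ℕ∞) := by
  obtain ⟨x, y, hx, -, hxr, -⟩ := hdepth
  have hκ : ℵ₀ < #(ResidueField T) := hcard ▸ aleph0_lt_mk hx hxr
  obtain ⟨n, l, hl, hs, hQ0⟩ := exists_setup hequi hint hκ d hd1 hd2 hAss hreg
  obtain ⟨R, M, h, h1, h2, h3, h4⟩ := exists_final hs hκ hcard
    (base_state d n hd1 hs.hdn hs.hn hκ hint _ hQ0)
  haveI := R_isDomain h
  haveI := R_isLocalRing h
  haveI := R_noeth h4
  haveI := R_ufd h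
  obtain ⟨e, he⟩ := R_completion h h1 h4
  let X : LocalUFDWithCompletion T :=
    { A := R
      toCompletion := R.subtype
      completionEquiv := e
      completionEquiv_comp := he }
  refine ⟨X, ?_, ?_⟩
  · refine alphaAt_eq X ⊥ _ (d - 1) l hl (fun i => ?_) (fiber_zero_up hd1 h2)
    rw [eq_bot_iff]
    intro r hr
    have : (r : T) ∈ l.last.asIdeal := (LTSeries.monotone l (Fin.le_last i)) hr
    exact Ideal.mem_bot.2 (Subtype.ext (h.gen _ r.2 this))
  · intro p hp hp1
    have hp2 : p.height = 1 := by rw [← hp1, idealHt_prime]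
    obtain ⟨c, hc, hpc⟩ := height_one_eq h p hp2
    obtain ⟨l', hl', hhd, hla, -⟩ := (h.mem c hc).2.2.2
    refine alphaAt_eq X p hp (d - 1) l' hl' (fun i => ?_) (fun m hm => ?_)
    · refine (fiber_one_mem h hc _ ?_ ?_).trans hpc.symm
      · exact (LTSeries.monotone l' (Fin.zero_le i)) hhd
      · rw [← hla]; exact LTSeries.monotone l' (Fin.le_last i)
    · exact fiber_one_up h hd1 hc (fun P _ => h3 P) m (fun i => (hm i).trans hpc)
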